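/- arXiv:1804.11016 — 2 statements merged into one kernel-verified Lean document; each statement's English description precedes it below -/
import Mathlib

section
/- Let C' < C and let f₃ ∈ F_(C',β) be such that for each x the map y ↦ f₃(x,y) is C² on [0,1] (so that f₃ and its inverse in the second variable are Lipschitz in y with some constant L₃, and ∂f₃/∂x is Lipschitz in y with some constant K₃). Then for every ξ > 0, every integer m ≥ 1, and every closed interval I = [b₁,b₂] ⊂ [0,1] with rational endpoints and 0 < b₁ ≤ b₂ < 1, there exist n ∈ ℕ and a function f̃ ∈ F_(C,β) such that d_α(f̃, f₃) < ξ/3 and f̃ ∈ A_{n,m,I} (in particular f̃ ∈ B_{m,I}). -/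
open MeasureTheory Set Filter Topology
open scoped ENNReal

noncomputable section

/-- The unit square `M = [0,1]²`. -/
def MSq : Set (ℝ × ℝ) := unitInterval ×ˢ unitInterval

/-- Lower `(C,γ)`-bi-Hölder bound in the second variable. -/
def BiHolderLower (C γ : ℝ) (f : ℝ → ℝ → ℝ) : Prop :=
  ∀ x ∈ unitInterval, ∀ y₁ ∈ unitInterval, ∀ y₂ ∈ unitInterval, y₁ ≠ y₂ →
    C⁻¹ * |y₂ - y₁| ^ (1 / γ) ≤ |f x y₂ - f x y₁|

/-- Upper `(C,γ)`-Hölder bound in the second variable. -/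
def BiHolderUpper (C γ : ℝ) (f : ℝ → ℝ → ℝ) : Prop :=
  ∀ x ∈ unitInterval, ∀ y₁ ∈ unitInterval, ∀ y₂ ∈ unitInterval, y₁ ≠ y₂ →
    |f x y₂ - f x y₁| ≤ C * |y₂ - y₁| ^ γ

/-- Membership in the space `F_(C,γ)`: conditions (i)–(iv); `fx` plays the role of `∂f/∂x`. -/
structure IsFol (C γ : ℝ) (f fx : ℝ → ℝ → ℝ) : Prop where
  mapsTo : ∀ x ∈ unitInterval, ∀ y ∈ unitInterval, f x y ∈ unitInterval
  hasDeriv : ∀ y ∈ unitInterval, ∀ x ∈ unitInterval,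
    HasDerivWithinAt (fun x' => f x' y) (fx x y) unitInterval x
  derivCont : ContinuousOn (fun p : ℝ × ℝ => fx p.1 p.2) MSq
  eq_id : ∀ y ∈ unitInterval, f 0 y = y
  eq_bot : ∀ x ∈ unitInterval, f x 0 = 0
  eq_top : ∀ x ∈ unitInterval, f x 1 = 1
  lower : BiHolderLower C γ f
  upper : BiHolderUpper C γ f

/-- The space `F_(C,γ)`. -/
structure Fol (C γ : ℝ) where
  f : ℝ → ℝ → ℝ
  fx : ℝ → ℝ → ℝ
  isFol : IsFol C γ f fx

/-- The inverse of `y ↦ f x y` on `[0,1]`, i.e. the holonomy `h^f_{x,0}`. -/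
def hinv (f : ℝ → ℝ → ℝ) (x : ℝ) : ℝ → ℝ := Function.invFunOn (f x) unitInterval

/-- The `C⁰` distance over the square. -/
def C0dist (u v : ℝ → ℝ → ℝ) : ℝ :=
  sSup {r | ∃ x ∈ unitInterval, ∃ y ∈ unitInterval, r = |u x y - v x y|}

/-- The `α`-Hölder seminorm of the difference `h - k` on `[0,1]`. -/
def holDist (α : ℝ) (h k : ℝ → ℝ) : ℝ :=
  sSup {r | ∃ y₁ ∈ unitInterval, ∃ y₂ ∈ unitInterval, y₁ ≠ y₂ ∧
    r = |(h y₂ - k y₂) - (h y₁ - k y₁)| / |y₂ - y₁| ^ α}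

/-- The distance `d_α`, on raw data `(f, ∂f/∂x)`, `(g, ∂g/∂x)`. -/
def dalpha (α : ℝ) (f fx g gx : ℝ → ℝ → ℝ) : ℝ :=
  C0dist f g + C0dist fx gx +
    sSup {r | ∃ x ∈ unitInterval,
      r = max (holDist α (f x) (g x)) (holDist α (hinv f x) (hinv g x))}

/-- The distance `d_α` on `F_(C,γ)`. -/
def dalphaF {C γ : ℝ} (α : ℝ) (F G : Fol C γ) : ℝ := dalpha α F.f F.fx G.f G.fx

/-- Openness with respect to a distance function. -/
def IsOpenWrt {X : Type*} (d : X → X → ℝ) (s : Set X) : Prop :=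
  ∀ f ∈ s, ∃ ε > 0, ∀ g, d g f < ε → g ∈ s

/-- Density with respect to a distance function. -/
def IsDenseWrt {X : Type*} (d : X → X → ℝ) (s : Set X) : Prop :=
  ∀ f : X, ∀ ε > 0, ∃ g ∈ s, d g f < ε

/-- Lebesgue measure `μ` on the unit square `M`. -/
def muM : Measure (ℝ × ℝ) := volume.restrict MSq

/-- The projection `π_f(x,z) = f(x,·)⁻¹(z)` along the leaves. -/
def projF (f : ℝ → ℝ → ℝ) : ℝ × ℝ → ℝ := fun p => hinv f p.1 p.2

/-- The quotient measure `μ̂ = (π_f)_* μ`. -/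
def quotM {C γ : ℝ} (F : Fol C γ) : Measure ℝ := muM.map (projF F.f)

/-- The leaf `L_y = {(x, f(x,y)) : x ∈ [0,1]}`. -/
def Leaf {C γ : ℝ} (F : Fol C γ) (y : ℝ) : Set (ℝ × ℝ) :=
  (fun x => (x, F.f x y)) '' unitInterval

/-- `(ν_y)` is a Rokhlin disintegration of Lebesgue measure on the square w.r.t. `π_f`. -/
def IsDisint {C γ : ℝ} (F : Fol C γ) (ν : ℝ → Measure (ℝ × ℝ)) : Prop :=
  (∀ y, IsProbabilityMeasure (ν y)) ∧
  (∀ E : Set (ℝ × ℝ), MeasurableSet E → Measurable fun y => ν y E) ∧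
  (∀ᵐ y ∂quotM F, ν y (Leaf F y) = 1) ∧
  (∀ E : Set (ℝ × ℝ), MeasurableSet E → muM E = ∫⁻ y, ν y E ∂quotM F)

/-- The element `P_i` of the partition `P_{f,n}`. -/
def Pelt (f : ℝ → ℝ → ℝ) (n i : ℕ) : Set (ℝ × ℝ) :=
  {p | p.1 ∈ unitInterval ∧ f p.1 ((i : ℝ) / 2 ^ n) ≤ p.2 ∧ p.2 < f p.1 (((i : ℝ) + 1) / 2 ^ n)}

/-- `Ĩ = [b₁,b₂] × [0,1]`. -/
def Itilde (b₁ b₂ : ℝ) : Set (ℝ × ℝ) := Icc b₁ b₂ ×ˢ unitInterval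

/-- The set `A_{n,m,I}`. -/
def Aset (C γ : ℝ) (n m : ℕ) (b₁ b₂ : ℝ) : Set (Fol C γ) :=
  {F | ∀ i < 2 ^ n,
    muM (Pelt F.f n i ∩ Itilde b₁ b₂) / muM (Pelt F.f n i) < 1 / (m : ℝ≥0∞) ∨
    1 - 1 / (m : ℝ≥0∞) < muM (Pelt F.f n i ∩ Itilde b₁ b₂) / muM (Pelt F.f n i)}

/-- The set `B_{m,I}`. -/
def Bset (C γ : ℝ) (m : ℕ) (b₁ b₂ : ℝ) : Set (Fol C γ) := ⋃ n : ℕ, Aset C γ n m b₁ b₂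

/-- The leaf measure `λ_y`: pushforward of 1-dimensional Lebesgue measure on `[0,1]`
under `x ↦ (x, f(x,y))`. -/
def leafMeas {C γ : ℝ} (F : Fol C γ) (y : ℝ) : Measure (ℝ × ℝ) :=
  (volume.restrict unitInterval).map fun x => (x, F.f x y)

/-- Ramp function: `0` for `t ≤ i`, `t - i` on `[i,i+1]`, `1` for `t ≥ i+1`. -/
def ramp (i : ℕ) (t : ℝ) : ℝ := min t ((i : ℝ) + 1) - min t (i : ℝ)

/-- Piecewise linear interpolation of the values `v i` at the nodes `i / N`. -/
def PL (N : ℕ) (v : ℕ → ℝ) (y : ℝ) : ℝ :=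
  v 0 + ∑ i ∈ Finset.range N, (v (i + 1) - v i) * ramp i (N * y)

lemma ramp_mono (i : ℕ) : Monotone (ramp i) := by
  intro a b h
  unfold ramp
  rcases le_total a (i : ℝ) with h1 | h1 <;> rcases le_total b (i : ℝ) with h2 | h2 <;>
  rcases le_total a ((i : ℝ) + 1) with h3 | h3 <;> rcases le_total b ((i : ℝ) + 1) with h4 | h4 <;>
  simp only [min_eq_left, min_eq_right, *] <;> linarith

lemma ramp_continuous (i : ℕ) : Continuous (ramp i) := by
  unfold ramp; fun_prop

lemma sum_ramp (N : ℕ) (t : ℝ) (h0 : 0 ≤ t) (h1 : t ≤ N) :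
    ∑ i ∈ Finset.range N, ramp i t = t := by
  have : ∀ i ∈ Finset.range N, ramp i t =
      (fun k : ℕ => min t (k : ℝ)) (i + 1) - (fun k : ℕ => min t (k : ℝ)) i := by
    intro i _; simp [ramp]
  rw [Finset.sum_congr rfl this, Finset.sum_range_sub (fun k : ℕ => min t (k : ℝ))]
  simp [h0, h1]

lemma PL_partial (v : ℕ → ℝ) (t : ℝ) (N : ℕ) (h : (N : ℝ) ≤ t) :
    v 0 + ∑ i ∈ Finset.range N, (v (i + 1) - v i) * ramp i t = v N := by
  have : ∀ i ∈ Finset.range N, (v (i + 1) - v i) * ramp i t = v (i + 1) - v i := by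
    intro i hi
    have hi' : (i : ℝ) + 1 ≤ N := by exact_mod_cast Finset.mem_range.mp hi
    have : ramp i t = 1 := by
      unfold ramp
      rw [min_eq_right (by linarith), min_eq_right (by linarith)]; ring
    rw [this, mul_one]
  rw [Finset.sum_congr rfl this, Finset.sum_range_sub]; ring

lemma PL_partial2 (v : ℕ → ℝ) (t : ℝ) (k d : ℕ) (h0 : (k : ℝ) ≤ t) (h1 : t ≤ k + 1) :
    v 0 + ∑ i ∈ Finset.range (k + 1 + d), (v (i + 1) - v i) * ramp i t
      = v k + (t - k) * (v (k + 1) - v k) := by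
  induction d with
  | zero =>
    rw [add_zero, Finset.sum_range_succ, ← add_assoc, PL_partial v t k h0]
    unfold ramp
    rw [min_eq_left h1, min_eq_right h0]; ring
  | succ d ih =>
    rw [← add_assoc, Finset.sum_range_succ, ← add_assoc, ih]
    have : ramp (k + 1 + d) t = 0 := by
      unfold ramp
      have : (0 : ℝ) ≤ d := by positivity
      push_cast
      rw [min_eq_left (by linarith), min_eq_left (by linarith)]; ring
    rw [this]; ring

lemma PL_cell {N : ℕ} (v : ℕ → ℝ) (y : ℝ) (k : ℕ) (hk : k < N) (h0 : (k : ℝ) ≤ N * y)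
    (h1 : N * y ≤ k + 1) :
    PL N v y = (1 - (N * y - k)) * v k + (N * y - k) * v (k + 1) := by
  obtain ⟨d, rfl⟩ : ∃ d, N = k + 1 + d := ⟨N - (k + 1), by omega⟩
  unfold PL
  rw [PL_partial2 v _ k d h0 h1]; ring

lemma PL_node {N : ℕ} (hN : 0 < N) (v : ℕ → ℝ) (k : ℕ) (hk : k ≤ N) :
    PL N v ((k : ℝ) / N) = v k := by
  have hN' : (N : ℝ) ≠ 0 := by positivity
  have e : (N : ℝ) * ((k : ℝ) / N) = k := by field_simp
  rcases hk.lt_or_eq with h | h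
  · rw [PL_cell v _ k h (by rw [e]) (by rw [e]; linarith), e]; ring
  · subst h
    unfold PL; rw [e]; exact PL_partial v _ _ le_rfl

lemma exists_cell {N : ℕ} (hN : 0 < N) {y : ℝ} (hy : y ∈ unitInterval) :
    ∃ k : ℕ, k < N ∧ (k : ℝ) ≤ N * y ∧ N * y ≤ k + 1 := by
  have hNr : (0 : ℝ) < N := by positivity
  have h0 : 0 ≤ (N : ℝ) * y := mul_nonneg hNr.le hy.1
  rcases hy.2.lt_or_eq with h | h
  · refine ⟨⌊(N : ℝ) * y⌋₊, ?_, Nat.floor_le h0, (Nat.lt_floor_add_one _).le⟩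
    rw [Nat.floor_lt h0]; nlinarith
  · subst h
    refine ⟨N - 1, by omega, ?_, ?_⟩
    · rw [Nat.cast_sub hN]; simp
    · rw [Nat.cast_sub hN]; simp

lemma PL_sub (N : ℕ) (v : ℕ → ℝ) (y z : ℝ) :
    PL N v z - PL N v y =
      ∑ i ∈ Finset.range N, (v (i + 1) - v i) * (ramp i (N * z) - ramp i (N * y)) := by
  unfold PL
  simp only [mul_sub, Finset.sum_sub_distrib]; ring

lemma PL_bilip {N : ℕ} (hN : 0 < N) (v : ℕ → ℝ) (c L : ℝ)
    (hc : ∀ i < N, c / N ≤ v (i + 1) - v i) (hL : ∀ i < N, v (i + 1) - v i ≤ L / N)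
    {y z : ℝ} (hy : y ∈ unitInterval) (hz : z ∈ unitInterval) (hyz : y ≤ z) :
    c * (z - y) ≤ PL N v z - PL N v y ∧ PL N v z - PL N v y ≤ L * (z - y) := by
  have hNr : (0 : ℝ) < N := by positivity
  have hr : ∀ i, 0 ≤ ramp i (N * z) - ramp i (N * y) := fun i =>
    sub_nonneg.2 (ramp_mono i (by nlinarith))
  have hs : ∑ i ∈ Finset.range N, (ramp i (N * z) - ramp i (N * y)) = N * (z - y) := by
    rw [Finset.sum_sub_distrib, sum_ramp, sum_ramp]
    · ring
    · nlinarith [hy.1]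
    · nlinarith [hy.2]
    · nlinarith [hz.1]
    · nlinarith [hz.2]
  rw [PL_sub]
  constructor
  · calc c * (z - y) = ∑ i ∈ Finset.range N, c / N * (ramp i (N * z) - ramp i (N * y)) := by
          rw [← Finset.mul_sum, hs]; field_simp
      _ ≤ _ := Finset.sum_le_sum fun i hi =>
          mul_le_mul_of_nonneg_right (hc i (Finset.mem_range.1 hi)) (hr i)
  · calc _ ≤ ∑ i ∈ Finset.range N, L / N * (ramp i (N * z) - ramp i (N * y)) := 
          Finset.sum_le_sum fun i hi =>
          mul_le_mul_of_nonneg_right (hL i (Finset.mem_range.1 hi)) (hr i)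
      _ = L * (z - y) := by rw [← Finset.mul_sum, hs]; field_simp

lemma PL_mono {N : ℕ} (v : ℕ → ℝ) (hc : ∀ i < N, v i ≤ v (i + 1))
    {y z : ℝ} (hyz : y ≤ z) : PL N v y ≤ PL N v z := by
  rw [← sub_nonneg, PL_sub]
  refine Finset.sum_nonneg fun i hi => mul_nonneg ?_ ?_
  · have := hc i (Finset.mem_range.1 hi); linarith
  · have : (N : ℝ) * y ≤ N * z := by gcongr
    have := ramp_mono i this
    linarith

lemma PL_close {N : ℕ} (hN : 0 < N) (v : ℕ → ℝ) {y : ℝ} (hy : y ∈ unitInterval) (a η : ℝ)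
    (h : ∀ i ≤ N, |(i : ℝ) / N - y| ≤ 1 / N → |v i - a| ≤ η) : |PL N v y - a| ≤ η := by
  have hNr : (0 : ℝ) < N := by positivity
  obtain ⟨k, hk, h0, h1⟩ := exists_cell hN hy
  rw [PL_cell v y k hk h0 h1]
  have e1 : |(k : ℝ) / N - y| ≤ 1 / N := by
    have : (k : ℝ) / N - y = (k - N * y) / N := by field_simp
    rw [this, abs_div, abs_of_pos hNr]
    gcongr
    rw [abs_le]; constructor <;> linarith
  have e2 : |((k + 1 : ℕ) : ℝ) / N - y| ≤ 1 / N := by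
    have : ((k + 1 : ℕ) : ℝ) / N - y = (k + 1 - N * y) / N := by push_cast; field_simp
    rw [this, abs_div, abs_of_pos hNr]
    gcongr
    rw [abs_le]; constructor <;> linarith
  have a1 := abs_le.1 (h k hk.le e1)
  have a2 := abs_le.1 (h (k + 1) hk e2)
  rw [abs_le]
  constructor <;> nlinarith

lemma PL_jensen_upper {N : ℕ} (hN : 0 < N) (φ : ℝ → ℝ) (C β : ℝ) (hC : 0 < C) (hβ0 : 0 < β)
    (hβ1 : β < 1)
    (h : ∀ y ∈ unitInterval, ∀ z ∈ unitInterval, y < z → φ z - φ y ≤ C * (z - y) ^ β)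
    {y z : ℝ} (hy : y ∈ unitInterval) (hz : z ∈ unitInterval) (hyz : y < z) :
    PL N (fun i => φ (i / N)) z - PL N (fun i => φ (i / N)) y ≤ C * (z - y) ^ β := by
  have hNr : (0 : ℝ) < N := by positivity
  have hnode : ∀ k : ℕ, k ≤ N → (k : ℝ) / N ∈ unitInterval := fun k hk =>
    ⟨by positivity, by rw [div_le_one hNr]; exact_mod_cast hk⟩
  have hcon : ∀ x y a b : ℝ, 0 ≤ x → 0 ≤ y → 0 ≤ a → 0 ≤ b → a + b = 1 →
      a * x ^ β + b * y ^ β ≤ (a * x + b * y) ^ β := fun x y a b hx hy ha hb hab =>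
    (Real.concaveOn_rpow hβ0.le hβ1.le).2 hx hy ha hb hab
  have h' : ∀ k l : ℕ, k ≤ l → l ≤ N →
      φ (l / N) - φ (k / N) ≤ C * ((l : ℝ) / N - k / N) ^ β := by
    intro k l hkl hl
    rcases hkl.lt_or_eq with h1 | h1
    · exact h _ (hnode k (by omega)) _ (hnode l hl) (by gcongr)
    · subst h1; simp [Real.zero_rpow hβ0.ne']
  obtain ⟨k, hk, hk0, hk1⟩ := exists_cell hN hy
  obtain ⟨l, hl, hl0, hl1⟩ := exists_cell hN hz
  rcases lt_or_ge k l with hkl | hkl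
  · -- different cells
    rw [PL_cell _ y k hk hk0 hk1, PL_cell _ z l hl hl0 hl1]
    set s := (N : ℝ) * y - k with hs
    set t := (N : ℝ) * z - l with ht
    have hkl' : (k : ℝ) + 1 ≤ l := by exact_mod_cast hkl
    have step1 : ∀ p : ℕ, p ≤ l → (1 - t) * φ (l / N) + t * φ ((l + 1 : ℕ) / N) - φ (p / N)
        ≤ C * (z - p / N) ^ β := by
      intro p hp
      have b1 := h' p l hp hl.le
      have b2 := h' p (l + 1) (by omega) hl
      have hp' : (p : ℝ) / N ≤ l / N := by gcongr
      have hp'' : (p : ℝ) / N ≤ (l + 1 : ℕ) / N := by gcongr; omega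
      have j := hcon ((l : ℝ) / N - p / N) (((l + 1 : ℕ) : ℝ) / N - p / N) (1 - t) (t)
        (by linarith) (by linarith) (by linarith) (by linarith) (by ring)
      have e : (1 - t) * ((l : ℝ) / N - p / N) + t * (((l + 1 : ℕ) : ℝ) / N - p / N)
          = z - p / N := by
        rw [ht]; push_cast; field_simp; ring
      rw [e] at j
      nlinarith
    have b1 := step1 k hkl.le
    have b2 := step1 (k + 1) hkl
    have hlz : (l : ℝ) / N ≤ z := by rw [div_le_iff₀ hNr]; linarith
    have hp' : (k : ℝ) / N ≤ l / N := by gcongr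
    have hp'' : ((k + 1 : ℕ) : ℝ) / N ≤ l / N := by gcongr; omega
    have j := hcon (z - k / N) (z - ((k + 1 : ℕ) : ℝ) / N) (1 - s) (s)
        (by linarith) (by linarith) (by linarith) (by linarith) (by ring)
    have e : (1 - s) * (z - (k : ℝ) / N) + s * (z - ((k + 1 : ℕ) : ℝ) / N)
          = z - y := by
        rw [hs]; push_cast; field_simp; ring
    rw [e] at j
    nlinarith
  · -- same cell
    have hz0 : (k : ℝ) ≤ N * z := by nlinarith
    have hz1 : (N : ℝ) * z ≤ k + 1 := by
      have : (l : ℝ) ≤ k := by exact_mod_cast hkl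
      linarith
    rw [PL_cell _ y k hk hk0 hk1, PL_cell _ z k hk hz0 hz1]
    have b := h' k (k + 1) (by omega) hk
    have e1 : (((k + 1 : ℕ) : ℝ) / N - k / N) = 1 / N := by push_cast; field_simp; ring
    rw [e1] at b
    set w := φ ((k + 1 : ℕ) / N) - φ (k / N) with hw
    have hd : 0 < (N : ℝ) * (z - y) := by nlinarith
    have hd1 : (N : ℝ) * (z - y) ≤ 1 := by nlinarith
    have e2 : (z - y) ^ β = (N * (z - y)) ^ β * (1 / (N : ℝ)) ^ β := by
      rw [← Real.mul_rpow hd.le (by positivity)]; congr 1; field_simp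
    have e3 : (N : ℝ) * (z - y) ≤ (N * (z - y)) ^ β := by
      conv_lhs => rw [← Real.rpow_one ((N : ℝ) * (z - y))]
      exact Real.rpow_le_rpow_of_exponent_ge hd hd1 hβ1.le
    rw [e2]
    have p : 0 ≤ C * (1 / (N : ℝ)) ^ β := by positivity
    calc _ = (N * (z - y)) * w := by rw [hw]; ring
      _ ≤ (N * (z - y)) * (C * (1 / (N : ℝ)) ^ β) := by gcongr
      _ ≤ (N * (z - y)) ^ β * (C * (1 / (N : ℝ)) ^ β) := by gcongr
      _ = _ := by ring

lemma PL_jensen_lower {N : ℕ} (hN : 0 < N) (φ : ℝ → ℝ) (C β : ℝ) (hC : 0 < C)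
    (hβ1 : 1 < β)
    (h : ∀ y ∈ unitInterval, ∀ z ∈ unitInterval, y < z → C * (z - y) ^ β ≤ φ z - φ y)
    {y z : ℝ} (hy : y ∈ unitInterval) (hz : z ∈ unitInterval) (hyz : y < z) :
    C * (z - y) ^ β ≤ PL N (fun i => φ (i / N)) z - PL N (fun i => φ (i / N)) y := by
  have hNr : (0 : ℝ) < N := by positivity
  have hβ0 : 0 < β := by linarith
  have hnode : ∀ k : ℕ, k ≤ N → (k : ℝ) / N ∈ unitInterval := fun k hk =>
    ⟨by positivity, by rw [div_le_one hNr]; exact_mod_cast hk⟩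
  have hcon : ∀ x y a b : ℝ, 0 ≤ x → 0 ≤ y → 0 ≤ a → 0 ≤ b → a + b = 1 →
      (a * x + b * y) ^ β ≤ a * x ^ β + b * y ^ β := fun x y a b hx hy ha hb hab =>
    (convexOn_rpow hβ1.le).2 hx hy ha hb hab
  have h' : ∀ k l : ℕ, k ≤ l → l ≤ N →
      C * ((l : ℝ) / N - k / N) ^ β ≤ φ (l / N) - φ (k / N) := by
    intro k l hkl hl
    rcases hkl.lt_or_eq with h1 | h1
    · exact h _ (hnode k (by omega)) _ (hnode l hl) (by gcongr)
    · subst h1; simp [Real.zero_rpow hβ0.ne']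
  obtain ⟨k, hk, hk0, hk1⟩ := exists_cell hN hy
  obtain ⟨l, hl, hl0, hl1⟩ := exists_cell hN hz
  rcases lt_or_ge k l with hkl | hkl
  · -- different cells
    rw [PL_cell _ y k hk hk0 hk1, PL_cell _ z l hl hl0 hl1]
    set s := (N : ℝ) * y - k with hs
    set t := (N : ℝ) * z - l with ht
    have hkl' : (k : ℝ) + 1 ≤ l := by exact_mod_cast hkl
    have step1 : ∀ p : ℕ, p ≤ l → C * (z - p / N) ^ β ≤
        (1 - t) * φ (l / N) + t * φ ((l + 1 : ℕ) / N) - φ (p / N) := by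
      intro p hp
      have b1 := h' p l hp hl.le
      have b2 := h' p (l + 1) (by omega) hl
      have hp' : (p : ℝ) / N ≤ l / N := by gcongr
      have hp'' : (p : ℝ) / N ≤ (l + 1 : ℕ) / N := by gcongr; omega
      have j := hcon ((l : ℝ) / N - p / N) (((l + 1 : ℕ) : ℝ) / N - p / N) (1 - t) (t)
        (by linarith) (by linarith) (by linarith) (by linarith) (by ring)
      have e : (1 - t) * ((l : ℝ) / N - p / N) + t * (((l + 1 : ℕ) : ℝ) / N - p / N)
          = z - p / N := by
        rw [ht]; push_cast; field_simp; ring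
      rw [e] at j
      nlinarith
    have b1 := step1 k hkl.le
    have b2 := step1 (k + 1) hkl
    have hlz : (l : ℝ) / N ≤ z := by rw [div_le_iff₀ hNr]; linarith
    have hp' : (k : ℝ) / N ≤ l / N := by gcongr
    have hp'' : ((k + 1 : ℕ) : ℝ) / N ≤ l / N := by gcongr; omega
    have j := hcon (z - k / N) (z - ((k + 1 : ℕ) : ℝ) / N) (1 - s) (s)
        (by linarith) (by linarith) (by linarith) (by linarith) (by ring)
    have e : (1 - s) * (z - (k : ℝ) / N) + s * (z - ((k + 1 : ℕ) : ℝ) / N)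
          = z - y := by
        rw [hs]; push_cast; field_simp; ring
    rw [e] at j
    nlinarith
  · -- same cell
    have hz0 : (k : ℝ) ≤ N * z := by nlinarith
    have hz1 : (N : ℝ) * z ≤ k + 1 := by
      have : (l : ℝ) ≤ k := by exact_mod_cast hkl
      linarith
    rw [PL_cell _ y k hk hk0 hk1, PL_cell _ z k hk hz0 hz1]
    have b := h' k (k + 1) (by omega) hk
    have e1 : (((k + 1 : ℕ) : ℝ) / N - k / N) = 1 / N := by push_cast; field_simp; ring
    rw [e1] at b
    set w := φ ((k + 1 : ℕ) / N) - φ (k / N) with hw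
    have hd : 0 < (N : ℝ) * (z - y) := by nlinarith
    have hd1 : (N : ℝ) * (z - y) ≤ 1 := by nlinarith
    have e2 : (z - y) ^ β = (N * (z - y)) ^ β * (1 / (N : ℝ)) ^ β := by
      rw [← Real.mul_rpow hd.le (by positivity)]; congr 1; field_simp
    have e3 : (N * (z - y)) ^ β ≤ (N : ℝ) * (z - y) := by
      conv_rhs => rw [← Real.rpow_one ((N : ℝ) * (z - y))]
      exact Real.rpow_le_rpow_of_exponent_ge hd hd1 hβ1.le
    rw [e2]
    have p : 0 ≤ C * (1 / (N : ℝ)) ^ β := by positivity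
    calc _ = (N * (z - y)) ^ β * (C * (1 / (N : ℝ)) ^ β) := by ring
      _ ≤ (N * (z - y)) * (C * (1 / (N : ℝ)) ^ β) := by gcongr
      _ ≤ (N * (z - y)) * w := by gcongr
      _ = _ := by rw [hw]; ring

lemma fol_cont {C β : ℝ} {f fx : ℝ → ℝ → ℝ} (hC : 0 < C) (hβ : 0 < β) (F : IsFol C β f fx) {x : ℝ}
    (hx : x ∈ unitInterval) : ContinuousOn (f x) unitInterval := by
  intro y hy
  rw [ContinuousWithinAt, tendsto_iff_norm_sub_tendsto_zero]
  have h1 : Tendsto (fun z : ℝ => C * |z - y| ^ β) (𝓝[unitInterval] y) (𝓝 0) := by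
    have : ContinuousAt (fun z : ℝ => C * |z - y| ^ β) y := by
      refine ContinuousAt.mul continuousAt_const (ContinuousAt.rpow_const ?_ (Or.inr hβ.le))
      fun_prop
    have h2 := this.tendsto
    simp only [sub_self, abs_zero, Real.zero_rpow hβ.ne', mul_zero] at h2
    exact h2.mono_left nhdsWithin_le_nhds
  refine squeeze_zero' (Eventually.of_forall fun _ => norm_nonneg _) ?_ h1
  filter_upwards [self_mem_nhdsWithin] with z hz
  rw [Real.norm_eq_abs]
  by_cases h : y = z
  · subst h; simp [Real.zero_rpow hβ.ne']
  · exact F.upper x hx y hy z hz h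

lemma fol_strictMono {C β : ℝ} {f fx : ℝ → ℝ → ℝ} (hC : 0 < C) (hβ : 0 < β) (F : IsFol C β f fx)
    {x : ℝ} (hx : x ∈ unitInterval) : StrictMonoOn (f x) unitInterval := by
  refine ContinuousOn.strictMonoOn_of_injOn_Icc zero_le_one ?_ (fol_cont hC hβ F hx) ?_
  · rw [F.eq_bot x hx, F.eq_top x hx]; exact zero_le_one
  · intro y hy z hz h
    by_contra hne
    have := F.lower x hx y hy z hz hne
    rw [h, sub_self, abs_zero] at this
    have h2 : 0 < |z - y| := abs_pos.2 (sub_ne_zero.2 (Ne.symm hne))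
    have : 0 < C⁻¹ * |z - y| ^ (1 / β) := by positivity
    linarith

lemma fol_lower {C β : ℝ} {f fx : ℝ → ℝ → ℝ} (hC : 0 < C) (hβ : 0 < β) (F : IsFol C β f fx)
    {x : ℝ} (hx : x ∈ unitInterval) : ∀ y ∈ unitInterval, ∀ z ∈ unitInterval, y < z →
      C⁻¹ * (z - y) ^ (1 / β) ≤ f x z - f x y := by
  intro y hy z hz hyz
  have h := F.lower x hx y hy z hz hyz.ne
  have := fol_strictMono hC hβ F hx hy hz hyz
  rwa [abs_of_pos (sub_pos.2 hyz), abs_of_pos (sub_pos.2 this)] at h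

lemma fol_upper {C β : ℝ} {f fx : ℝ → ℝ → ℝ} (F : IsFol C β f fx)
    {x : ℝ} (hx : x ∈ unitInterval) : ∀ y ∈ unitInterval, ∀ z ∈ unitInterval, y < z →
      f x z - f x y ≤ C * (z - y) ^ β := by
  intro y hy z hz hyz
  have h := F.upper x hx y hy z hz hyz.ne
  rw [abs_of_pos (sub_pos.2 hyz)] at h
  exact (le_abs_self _).trans h

lemma biHolder_of_ordered {C β : ℝ} {f : ℝ → ℝ → ℝ}
    (hm : ∀ x ∈ unitInterval, ∀ y ∈ unitInterval, ∀ z ∈ unitInterval, y < z → f x y ≤ f x z)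
    (hl : ∀ x ∈ unitInterval, ∀ y ∈ unitInterval, ∀ z ∈ unitInterval, y < z →
      C⁻¹ * (z - y) ^ (1 / β) ≤ f x z - f x y)
    (hu : ∀ x ∈ unitInterval, ∀ y ∈ unitInterval, ∀ z ∈ unitInterval, y < z →
      f x z - f x y ≤ C * (z - y) ^ β) : BiHolderLower C β f ∧ BiHolderUpper C β f := by
  constructor
  · intro x hx y hy z hz hne
    rcases hne.lt_or_gt with h | h
    · rw [abs_of_pos (sub_pos.2 h)]
      exact (hl x hx y hy z hz h).trans (le_abs_self _)
    · rw [abs_sub_comm, abs_sub_comm (f x z), abs_of_pos (sub_pos.2 h)]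
      exact (hl x hx z hz y hy h).trans (le_abs_self _)
  · intro x hx y hy z hz hne
    rcases hne.lt_or_gt with h | h
    · rw [abs_of_pos (sub_pos.2 h), abs_of_nonneg (sub_nonneg.2 (hm x hx y hy z hz h))]
      exact (hu x hx y hy z hz h)
    · rw [abs_sub_comm, abs_sub_comm z, abs_of_pos (sub_pos.2 h),
        abs_of_nonneg (sub_nonneg.2 (hm x hx z hz y hy h))]
      exact (hu x hx z hz y hy h)

lemma fol_unif {C β : ℝ} {f fx : ℝ → ℝ → ℝ} (hC : 0 < C) (hβ : 0 < β) (F : IsFol C β f fx)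
    (η : ℝ) (hη : 0 < η) : ∃ δ > 0, ∀ x ∈ unitInterval, ∀ y ∈ unitInterval, ∀ z ∈ unitInterval,
      |z - y| ≤ δ → |f x z - f x y| ≤ η ∧ |fx x z - fx x y| ≤ η := by
  have hcomp : IsCompact MSq := isCompact_Icc.prod isCompact_Icc
  have hu := hcomp.uniformContinuousOn_of_continuous F.derivCont
  rw [Metric.uniformContinuousOn_iff] at hu
  obtain ⟨δ, hδ, hu⟩ := hu η hη
  have h1 : Tendsto (fun t : ℝ => C * t ^ β) (𝓝[>] 0) (𝓝 0) := by
    have : ContinuousAt (fun z : ℝ => C * z ^ β) 0 := by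
      refine ContinuousAt.mul continuousAt_const (ContinuousAt.rpow_const ?_ (Or.inr hβ.le))
      fun_prop
    have h2 := this.tendsto
    simp only [Real.zero_rpow hβ.ne', mul_zero] at h2
    exact h2.mono_left nhdsWithin_le_nhds
  obtain ⟨δ', h3, h4⟩ := ((h1.eventually (eventually_le_nhds hη)).and self_mem_nhdsWithin).exists
  refine ⟨min δ' (δ / 2), lt_min h4 (by linarith), ?_⟩
  intro x hx y hy z hz h
  constructor
  · by_cases hne : y = z
    · subst hne; simp [hη.le]
    · calc |f x z - f x y| ≤ C * |z - y| ^ β := F.upper x hx y hy z hz hne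
        _ ≤ C * δ' ^ β := by gcongr; exact h.trans (min_le_left _ _)
        _ ≤ η := h3
  · have := hu (x, z) ⟨hx, hz⟩ (x, y) ⟨hx, hy⟩ (by
      rw [Prod.dist_eq]; simp only [dist_self, Real.dist_eq]
      rw [max_eq_right (abs_nonneg _)]
      have := h.trans (min_le_right _ _); linarith)
    rw [Real.dist_eq] at this; exact this.le

lemma PL_isFol {C β : ℝ} {N : ℕ} (hN : 0 < N) (v vx : ℕ → ℝ → ℝ)
    (hd : ∀ i ≤ N, ∀ x ∈ unitInterval, HasDerivWithinAt (v i) (vx i x) unitInterval x)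
    (hc : ∀ i ≤ N, ContinuousOn (vx i) unitInterval)
    (h0 : ∀ i ≤ N, v i 0 = (i : ℝ) / N)
    (hb : ∀ x ∈ unitInterval, v 0 x = 0) (ht : ∀ x ∈ unitInterval, v N x = 1)
    (hm : ∀ x ∈ unitInterval, ∀ i < N, v i x ≤ v (i + 1) x)
    (hl : ∀ x ∈ unitInterval, ∀ y ∈ unitInterval, ∀ z ∈ unitInterval, y < z →
      C⁻¹ * (z - y) ^ (1 / β) ≤ PL N (fun i => v i x) z - PL N (fun i => v i x) y)
    (hu : ∀ x ∈ unitInterval, ∀ y ∈ unitInterval, ∀ z ∈ unitInterval, y < z →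
      PL N (fun i => v i x) z - PL N (fun i => v i x) y ≤ C * (z - y) ^ β) :
    IsFol C β (fun x y => PL N (fun i => v i x) y) (fun x y => PL N (fun i => vx i x) y) := by
  have hNr : (0 : ℝ) < N := by positivity
  have e0 : ∀ w : ℕ → ℝ, PL N w 0 = w 0 := fun w => by
    have := PL_node hN w 0 (Nat.zero_le _); simpa using this
  have e1 : ∀ w : ℕ → ℝ, PL N w 1 = w N := fun w => by
    have := PL_node hN w N le_rfl; rwa [div_self hNr.ne'] at this
  have hmono : ∀ x ∈ unitInterval, ∀ y z : ℝ, y ≤ z →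
      PL N (fun i => v i x) y ≤ PL N (fun i => v i x) z := fun x hx y z h =>
    PL_mono _ (hm x hx) h
  obtain ⟨hl', hu'⟩ := biHolder_of_ordered (C := C) (β := β)
    (f := fun x y => PL N (fun i => v i x) y)
    (fun x hx y _ z _ h => hmono x hx y z h.le) hl hu
  refine ⟨?_, ?_, ?_, ?_, ?_, ?_, hl', hu'⟩
  · intro x hx y hy
    have a := hmono x hx 0 y hy.1
    have b := hmono x hx y 1 hy.2
    rw [e0, hb x hx] at a
    rw [e1, ht x hx] at b
    exact ⟨a, b⟩
  · intro y hy x hx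
    unfold PL
    refine (hd 0 (Nat.zero_le _) x hx).add (HasDerivWithinAt.fun_sum fun i hi => ?_)
    have hi := Finset.mem_range.1 hi
    exact ((hd (i + 1) hi x hx).sub (hd i hi.le x hx)).mul_const _
  · unfold PL
    have hfst : ∀ i ≤ N, ContinuousOn (fun p : ℝ × ℝ => vx i p.1) MSq := fun i hi =>
      (hc i hi).comp continuousOn_fst (fun p hp => hp.1)
    refine (hfst 0 (Nat.zero_le _)).add (continuousOn_finsetSum _ fun i hi => ?_)
    have hi := Finset.mem_range.1 hi
    refine ((hfst (i + 1) hi).sub (hfst i hi.le)).mul ?_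
    refine ((ramp_continuous i).comp ?_).continuousOn
    fun_prop
  · intro y hy
    obtain ⟨k, hk, h1, h2⟩ := exists_cell hN hy
    rw [PL_cell _ y k hk h1 h2, h0 k hk.le, h0 (k + 1) hk]
    push_cast; field_simp; ring
  · intro x hx; rw [e0, hb x hx]
  · intro x hx; rw [e1, ht x hx]

/-- Small `C⁰` perturbations that are bi-Lipschitz stay bi-Hölder, with a slightly larger constant. -/
lemma perturb {C C' β c L : ℝ} (hC' : 0 < C') (hCC : C' < C) (hβ0 : 0 < β) (hβ1 : β < 1)
    (hc : 0 < c) (hL : 0 < L) : ∃ η > 0, ∀ d e Δ : ℝ, 0 < Δ →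
      c * Δ ≤ d → d ≤ L * Δ → |d - e| ≤ 2 * η → C'⁻¹ * Δ ^ (1 / β) ≤ e → e ≤ C' * Δ ^ β →
      C⁻¹ * Δ ^ (1 / β) ≤ d ∧ d ≤ C * Δ ^ β := by
  have hC : 0 < C := hC'.trans hCC
  have hb : 1 < 1 / β := by rw [lt_div_iff₀ hβ0]; linarith
  have key : ∀ (K p : ℝ), 0 < K → 0 < p → ∃ r > 0, ∀ t : ℝ, 0 < t → t ≤ r → t ^ p ≤ K := by
    intro K p hK hp
    refine ⟨K ^ (1 / p), by positivity, fun t ht h => ?_⟩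
    calc t ^ p ≤ (K ^ (1 / p)) ^ p := by gcongr
      _ = K := by rw [← Real.rpow_mul hK.le]; simp [hp.ne']
  obtain ⟨r₁, hr₁, h₁⟩ := key (C / L) (1 - β) (by positivity) (by linarith)
  obtain ⟨r₂, hr₂, h₂⟩ := key (C * c) (1 / β - 1) (by positivity) (by linarith)
  have hinv : C⁻¹ < C'⁻¹ := by gcongr
  refine ⟨min ((C - C') * r₁ ^ β / 2) ((C'⁻¹ - C⁻¹) * r₂ ^ (1 / β) / 2), ?_, ?_⟩
  · have : 0 < C - C' := by linarith
    have : 0 < C'⁻¹ - C⁻¹ := by linarith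
    apply lt_min <;> positivity
  · intro d e Δ hΔ h1 h2 h3 h4 h5
    have h3a := h3.trans (mul_le_mul_of_nonneg_left (min_le_left _ _) zero_le_two)
    have h3b := h3.trans (mul_le_mul_of_nonneg_left (min_le_right _ _) zero_le_two)
    rw [abs_le] at h3a h3b
    constructor
    · rcases le_total Δ r₂ with h | h
      · have h6 := h₂ Δ hΔ h
        have h7 : Δ ^ (1 / β) = Δ ^ (1 / β - 1) * Δ := by
          conv_rhs => rw [← Real.rpow_one Δ, ← Real.rpow_mul hΔ.le, one_mul]
          rw [← Real.rpow_add hΔ]; congr 1; ring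
        rw [h7]
        refine le_trans ?_ h1
        rw [← mul_assoc]
        gcongr
        rw [inv_mul_le_iff₀ hC]; exact h6
      · have : (C'⁻¹ - C⁻¹) * r₂ ^ (1 / β) ≤ (C'⁻¹ - C⁻¹) * Δ ^ (1 / β) := by
          have : 0 < C'⁻¹ - C⁻¹ := by linarith
          gcongr
        linarith
    · rcases le_total Δ r₁ with h | h
      · have h6 := h₁ Δ hΔ h
        have h7 : Δ = Δ ^ (1 - β) * Δ ^ β := by
          rw [← Real.rpow_add hΔ]; simp
        refine h2.trans ?_
        conv_lhs => rw [h7]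
        rw [← mul_assoc]
        gcongr
        rw [le_div_iff₀ hL] at h6; linarith
      · have : (C - C') * r₁ ^ β ≤ (C - C') * Δ ^ β := by
          have : 0 < C - C' := by linarith
          gcongr
        linarith

lemma holDist_small {K α β ε : ℝ} (hK : 0 < K) (hα : 0 ≤ α) (hαβ : α < β) (hε : 0 < ε) :
    ∃ ρ > 0, ∀ h k : ℝ → ℝ,
      (∀ y ∈ unitInterval, ∀ z ∈ unitInterval, y ≠ z → |h z - h y| ≤ K * |z - y| ^ β) →
      (∀ y ∈ unitInterval, ∀ z ∈ unitInterval, y ≠ z → |k z - k y| ≤ K * |z - y| ^ β) →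
      (∀ y ∈ unitInterval, |h y - k y| ≤ ρ) → holDist α h k ≤ ε := by
  set r : ℝ := (ε / (2 * K)) ^ (1 / (β - α)) with hr
  have hp : 0 < β - α := by linarith
  have hr0 : 0 < r := by positivity
  have hrp : r ^ (β - α) = ε / (2 * K) := by
    rw [hr, ← Real.rpow_mul (by positivity), one_div, inv_mul_cancel₀ hp.ne', Real.rpow_one]
  refine ⟨ε * r ^ α / 2, by positivity, ?_⟩
  intro h k hh hk hd
  refine Real.sSup_le ?_ hε.le
  rintro _ ⟨y, hy, z, hz, hne, rfl⟩
  have hΔ : 0 < |z - y| := abs_pos.2 (sub_ne_zero.2 (Ne.symm hne))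
  rw [div_le_iff₀ (by positivity)]
  rcases le_total |z - y| r with hle | hle
  · have h1 : |(h z - k z) - (h y - k y)| ≤ |h z - h y| + |k z - k y| := by
      have : (h z - k z) - (h y - k y) = (h z - h y) - (k z - k y) := by ring
      rw [this]; exact abs_sub _ _
    have h2 : |z - y| ^ β = |z - y| ^ (β - α) * |z - y| ^ α := by
      rw [← Real.rpow_add hΔ]; simp
    have h3 : |z - y| ^ (β - α) ≤ ε / (2 * K) := by rw [← hrp]; gcongr
    calc _ ≤ 2 * K * |z - y| ^ β := by linarith [hh y hy z hz hne, hk y hy z hz hne]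
      _ = 2 * K * |z - y| ^ (β - α) * |z - y| ^ α := by rw [h2]; ring
      _ ≤ 2 * K * (ε / (2 * K)) * |z - y| ^ α := by gcongr
      _ = ε * |z - y| ^ α := by field_simp
  · have h1 := abs_sub (h z - k z) (h y - k y)
    calc _ ≤ ε * r ^ α := by linarith [hd y hy, hd z hz]
      _ ≤ ε * |z - y| ^ α := by gcongr

lemma hinv_spec {C β : ℝ} {f fx : ℝ → ℝ → ℝ} (hC : 0 < C) (hβ : 0 < β) (F : IsFol C β f fx)
    {x : ℝ} (hx : x ∈ unitInterval) {z : ℝ} (hz : z ∈ unitInterval) :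
    hinv f x z ∈ unitInterval ∧ f x (hinv f x z) = z := by
  have hsurj : ∃ y ∈ unitInterval, f x y = z := by
    have := intermediate_value_Icc (zero_le_one' ℝ) (fol_cont hC hβ F hx)
    rw [F.eq_bot x hx, F.eq_top x hx] at this
    exact this hz
  exact ⟨Function.invFunOn_mem hsurj, Function.invFunOn_eq hsurj⟩

lemma fol_inv_bound {C β : ℝ} {f fx : ℝ → ℝ → ℝ} (hC : 0 < C) (hβ : 0 < β) (F : IsFol C β f fx)
    {x : ℝ} (hx : x ∈ unitInterval) {y z : ℝ} (hy : y ∈ unitInterval) (hz : z ∈ unitInterval) :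
    |z - y| ≤ C ^ β * |f x z - f x y| ^ β := by
  by_cases hne : y = z
  · subst hne; simp [Real.zero_rpow hβ.ne']
  · have h := F.lower x hx y hy z hz hne
    rw [inv_mul_le_iff₀ hC] at h
    calc |z - y| = (|z - y| ^ (1 / β)) ^ β := by
          rw [← Real.rpow_mul (abs_nonneg _)]; simp [hβ.ne']
      _ ≤ (C * |f x z - f x y|) ^ β := by gcongr
      _ = _ := Real.mul_rpow hC.le (abs_nonneg _)

lemma dalpha_small {C α β ε : ℝ} (hC : 0 < C) (hα : 0 ≤ α) (hαβ : α < β) (hε : 0 < ε) :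
    ∃ η > 0, ∀ f fx g gx : ℝ → ℝ → ℝ, IsFol C β f fx → IsFol C β g gx →
      (∀ x ∈ unitInterval, ∀ y ∈ unitInterval, |f x y - g x y| ≤ η ∧ |fx x y - gx x y| ≤ η) →
      dalpha α f fx g gx < ε := by
  have hβ : 0 < β := by linarith
  obtain ⟨ρ₁, hρ₁, H₁⟩ := holDist_small (K := C) hC hα hαβ (ε := ε / 4) (by positivity)
  obtain ⟨ρ₂, hρ₂, H₂⟩ := holDist_small (K := C ^ β) (by positivity) hα hαβ (ε := ε / 4)
    (by positivity)
  set η₂ : ℝ := (ρ₂ / C ^ β) ^ (1 / β) with hη₂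
  have hη₂0 : 0 < η₂ := by positivity
  have hη₂p : C ^ β * η₂ ^ β = ρ₂ := by
    rw [hη₂, ← Real.rpow_mul (by positivity), one_div, inv_mul_cancel₀ hβ.ne', Real.rpow_one]
    field_simp
  refine ⟨min (ε / 4) (min ρ₁ η₂), by positivity, ?_⟩
  intro f fx g gx F G h
  have a1 : C0dist f g ≤ ε / 4 := by
    refine Real.sSup_le ?_ (by positivity)
    rintro _ ⟨x, hx, y, hy, rfl⟩
    exact (h x hx y hy).1.trans (min_le_left _ _)
  have a2 : C0dist fx gx ≤ ε / 4 := by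
    refine Real.sSup_le ?_ (by positivity)
    rintro _ ⟨x, hx, y, hy, rfl⟩
    exact (h x hx y hy).2.trans (min_le_left _ _)
  have a3 : sSup {r | ∃ x ∈ unitInterval,
      r = max (holDist α (f x) (g x)) (holDist α (hinv f x) (hinv g x))} ≤ ε / 4 := by
    refine Real.sSup_le ?_ (by positivity)
    rintro _ ⟨x, hx, rfl⟩
    refine max_le ?_ ?_
    · exact H₁ _ _ (F.upper x hx) (G.upper x hx) fun y hy =>
        (h x hx y hy).1.trans ((min_le_right _ _).trans (min_le_left _ _))
    · refine H₂ _ _ ?_ ?_ ?_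
      · intro y hy z hz _
        have hy' := hinv_spec hC hβ F hx hy
        have hz' := hinv_spec hC hβ F hx hz
        have := fol_inv_bound hC hβ F hx hy'.1 hz'.1
        rwa [hy'.2, hz'.2] at this
      · intro y hy z hz _
        have hy' := hinv_spec hC hβ G hx hy
        have hz' := hinv_spec hC hβ G hx hz
        have := fol_inv_bound hC hβ G hx hy'.1 hz'.1
        rwa [hy'.2, hz'.2] at this
      · intro z hz
        have hf := hinv_spec hC hβ F hx hz
        have hg := hinv_spec hC hβ G hx hz
        have h1 := fol_inv_bound hC hβ F hx hg.1 hf.1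
        have h2 := (h x hx _ hg.1).1.trans ((min_le_right _ _).trans (min_le_right _ _))
        rw [hf.2] at h1
        rw [hg.2, abs_sub_comm] at h2
        calc _ ≤ _ := h1
          _ ≤ C ^ β * η₂ ^ β := by gcongr
          _ = ρ₂ := hη₂p
  unfold dalpha
  linarith

lemma IsFol.mono_const {C C' β : ℝ} {f fx : ℝ → ℝ → ℝ} (hC' : 0 < C') (hCC : C' ≤ C)
    (F : IsFol C' β f fx) : IsFol C β f fx := by
  refine ⟨F.mapsTo, F.hasDeriv, F.derivCont, F.eq_id, F.eq_bot, F.eq_top, ?_, ?_⟩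
  · intro x hx y hy z hz h
    refine le_trans ?_ (F.lower x hx y hy z hz h)
    gcongr
  · intro x hx y hy z hz h
    refine (F.upper x hx y hy z hz h).trans ?_
    gcongr

lemma node_mem {N i : ℕ} (hN : 0 < N) (hi : i ≤ N) : (i : ℝ) / N ∈ unitInterval := by
  have hNr : (0 : ℝ) < N := by positivity
  exact ⟨by positivity, by rw [div_le_one hNr]; exact_mod_cast hi⟩

lemma fol_fx_cont {C β : ℝ} {f fx : ℝ → ℝ → ℝ} (F : IsFol C β f fx) {y : ℝ}
    (hy : y ∈ unitInterval) : ContinuousOn (fun x => fx x y) unitInterval :=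
  F.derivCont.comp (f := fun x : ℝ => (x, y)) (by fun_prop) (fun x hx => ⟨hx, hy⟩)

/-- Piecewise linear smoothing. -/
lemma smoothing {C β : ℝ} {f fx : ℝ → ℝ → ℝ} (hC : 0 < C) (hβ0 : 0 < β) (hβ1 : β < 1)
    (F : IsFol C β f fx) (η : ℝ) (hη : 0 < η) :
    ∃ g gx : ℝ → ℝ → ℝ, ∃ c L : ℝ, IsFol C β g gx ∧ 0 < c ∧ 0 < L ∧
      (∀ x ∈ unitInterval, ∀ y ∈ unitInterval, ∀ z ∈ unitInterval, y ≤ z →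
        c * (z - y) ≤ g x z - g x y ∧ g x z - g x y ≤ L * (z - y)) ∧
      (∀ x ∈ unitInterval, ∀ y ∈ unitInterval, |g x y - f x y| ≤ η ∧ |gx x y - fx x y| ≤ η) := by
  obtain ⟨δ, hδ, hunif⟩ := fol_unif hC hβ0 F η hη
  obtain ⟨n, hn⟩ := exists_nat_one_div_lt hδ
  set N : ℕ := n + 1 with hNdef
  have hN : 0 < N := Nat.succ_pos n
  have hNr : (0 : ℝ) < N := by positivity
  have hNδ : 1 / (N : ℝ) ≤ δ := by rw [hNdef]; push_cast; exact hn.le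
  have hb : 1 < 1 / β := by rw [lt_div_iff₀ hβ0]; linarith
  have hinc : ∀ x ∈ unitInterval, ∀ i < N,
      C⁻¹ * (1 / (N : ℝ)) ^ (1 / β) ≤ f x ((i + 1 : ℕ) / N) - f x (i / N) ∧
      f x ((i + 1 : ℕ) / N) - f x (i / N) ≤ C * (1 / (N : ℝ)) ^ β := by
    intro x hx i hi
    have e1 : (((i + 1 : ℕ) : ℝ) / N - i / N) = 1 / N := by push_cast; field_simp; ring
    have hlt : (i : ℝ) / N < (i + 1 : ℕ) / N := by gcongr; omega
    have a := fol_lower hC hβ0 F hx _ (node_mem hN hi.le) _ (node_mem hN hi) hlt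
    have b := fol_upper F hx _ (node_mem hN hi.le) _ (node_mem hN hi) hlt
    rw [e1] at a b
    exact ⟨a, b⟩
  have hc0 : 0 < C⁻¹ * (1 / (N : ℝ)) ^ (1 / β) := by positivity
  refine ⟨fun x y => PL N (fun i => f x (i / N)) y, fun x y => PL N (fun i => fx x (i / N)) y,
    N * (C⁻¹ * (1 / (N : ℝ)) ^ (1 / β)), N * (C * (1 / (N : ℝ)) ^ β), ?_, by positivity,
    by positivity, ?_, ?_⟩
  · refine PL_isFol hN (fun i x => f x (i / N)) (fun i x => fx x (i / N)) ?_ ?_ ?_ ?_ ?_ ?_ ?_ ?_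
    · intro i hi x hx; exact F.hasDeriv _ (node_mem hN hi) x hx
    · intro i hi; exact fol_fx_cont F (node_mem hN hi)
    · intro i hi; exact F.eq_id _ (node_mem hN hi)
    · intro x hx; simpa using F.eq_bot x hx
    · intro x hx; simpa [div_self hNr.ne'] using F.eq_top x hx
    · intro x hx i hi; have := (hinc x hx i hi).1; linarith
    · intro x hx y hy z hz h
      exact PL_jensen_lower hN (f x) C⁻¹ (1 / β) (by positivity) hb (fol_lower hC hβ0 F hx) hy hz h
    · intro x hx y hy z hz h
      exact PL_jensen_upper hN (f x) C β hC hβ0 hβ1 (fol_upper F hx) hy hz h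
  · intro x hx y hy z hz h
    refine PL_bilip hN (fun i => f x (i / N)) _ _ ?_ ?_ hy hz h
    · intro i hi; rw [mul_div_cancel_left₀ _ hNr.ne']; exact (hinc x hx i hi).1
    · intro i hi; rw [mul_div_cancel_left₀ _ hNr.ne']; exact (hinc x hx i hi).2
  · intro x hx y hy
    constructor
    · exact PL_close hN _ hy _ _ fun i hi h =>
        (hunif x hx y hy _ (node_mem hN hi) (h.trans hNδ)).1
    · exact PL_close hN _ hy _ _ fun i hi h =>
        (hunif x hx y hy _ (node_mem hN hi) (h.trans hNδ)).2

/-- Nodes of the oscillating perturbation. -/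
def vnode (N : ℕ) (g : ℝ → ℝ → ℝ) (s : ℝ → ℝ) (i : ℕ) (x : ℝ) : ℝ :=
  if Even i then g x (i / N) else
    g x ((i - 1 : ℕ) / N) + (1 + s x) / 2 * (g x ((i + 1 : ℕ) / N) - g x ((i - 1 : ℕ) / N))

/-- Derivatives of the nodes. -/
def vnodex (N : ℕ) (g gx : ℝ → ℝ → ℝ) (s s' : ℝ → ℝ) (i : ℕ) (x : ℝ) : ℝ :=
  if Even i then gx x (i / N) else
    gx x ((i - 1 : ℕ) / N) + (s' x / 2 * (g x ((i + 1 : ℕ) / N) - g x ((i - 1 : ℕ) / N)) +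
     (1 + s x) / 2 * (gx x ((i + 1 : ℕ) / N) - gx x ((i - 1 : ℕ) / N)))

lemma vnode_diff (N : ℕ) (g : ℝ → ℝ → ℝ) (s : ℝ → ℝ) (i : ℕ) :
    (Even i ∧ ∀ x, vnode N g s (i + 1) x - vnode N g s i x =
      (1 + s x) * ((g x ((i + 2 : ℕ) / N) - g x (i / N)) / 2)) ∨
    (¬ Even i ∧ ∀ x, vnode N g s (i + 1) x - vnode N g s i x =
      (1 - s x) * ((g x ((i + 1 : ℕ) / N) - g x ((i - 1 : ℕ) / N)) / 2)) := by
  by_cases h : Even i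
  · left
    refine ⟨h, fun x => ?_⟩
    have h1 : ¬ Even (i + 1) := by rw [Nat.even_add_one]; simpa using h
    simp only [vnode, h, h1, if_true, if_false, Nat.add_sub_cancel]
    ring
  · right
    refine ⟨h, fun x => ?_⟩
    have h1 : Even (i + 1) := by rw [Nat.even_add_one]; exact h
    simp only [vnode, h, h1, if_true, if_false]
    ring

set_option maxHeartbeats 2000000 in
lemma oscillate {C C' β c L ε S : ℝ} {g gx : ℝ → ℝ → ℝ} (hC' : 0 < C') (hCC : C' < C)
    (hβ0 : 0 < β) (hβ1 : β < 1)
    (G : IsFol C' β g gx) (hc : 0 < c) (hL : 0 < L)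
    (hbl : ∀ x ∈ unitInterval, ∀ y ∈ unitInterval, ∀ z ∈ unitInterval, y ≤ z →
        c * (z - y) ≤ g x z - g x y ∧ g x z - g x y ≤ L * (z - y))
    (s s' : ℝ → ℝ) (hs : ∀ x, HasDerivAt s (s' x) x) (hs' : Continuous s') (hs0 : s 0 = 0)
    (hε : 0 < ε) (hs1 : ∀ x ∈ unitInterval, ε ≤ 1 + s x) (hs2 : ∀ x ∈ unitInterval, ε ≤ 1 - s x)
    (hS : ∀ x ∈ unitInterval, |s' x| ≤ S) (η : ℝ) (hη : 0 < η) :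
    ∃ n : ℕ, ∃ f fx : ℝ → ℝ → ℝ, IsFol C β f fx ∧
      (∀ x ∈ unitInterval, ∀ y ∈ unitInterval, |f x y - g x y| ≤ η ∧ |fx x y - gx x y| ≤ η) ∧
      ∀ i : ℕ, i < 2 ^ n → ∃ W : ℝ → ℝ, (∀ x ∈ unitInterval, c / 2 ^ n ≤ W x ∧ W x ≤ L / 2 ^ n) ∧
        ((∀ x ∈ unitInterval,
            f x (((i : ℝ) + 1) / 2 ^ n) - f x ((i : ℝ) / 2 ^ n) = (1 + s x) * W x) ∨
         (∀ x ∈ unitInterval,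
            f x (((i : ℝ) + 1) / 2 ^ n) - f x ((i : ℝ) / 2 ^ n) = (1 - s x) * W x)) := by
  have hC : 0 < C := hC'.trans hCC
  have hS0 : 0 ≤ S := (abs_nonneg _).trans (hS 0 ⟨le_rfl, zero_le_one⟩)
  obtain ⟨η₁, hη₁, hpert⟩ := perturb (c := ε * c) (L := 2 * L) hC' hCC hβ0 hβ1 (by positivity)
    (by positivity)
  set η₂ := min η₁ (η / (3 + S)) with hη₂
  have hη₂0 : 0 < η₂ := by positivity
  have hη₂1 : η₂ ≤ η₁ := min_le_left _ _
  have hη₂2 : η₂ * (3 + S) ≤ η := by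
    rw [← le_div_iff₀ (by positivity)]; exact min_le_right _ _
  obtain ⟨δ, hδ, hunif⟩ := fol_unif hC' hβ0 G η₂ hη₂0
  obtain ⟨n, hn⟩ := exists_pow_lt_of_lt_one (show 0 < δ / 2 by positivity)
    (show (1 / 2 : ℝ) < 1 by norm_num)
  obtain ⟨N, hNdef⟩ : ∃ N : ℕ, N = 2 ^ (n + 1) := ⟨_, rfl⟩
  have hN : 0 < N := by rw [hNdef]; positivity
  have hNr : (0 : ℝ) < N := by positivity
  have hNe : Even N := by rw [hNdef, Nat.even_pow]; exact ⟨even_two, by omega⟩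
  have hNδ : 2 / (N : ℝ) ≤ δ := by
    have : 1 / (N : ℝ) ≤ (1 / 2) ^ n := by
      rw [hNdef, one_div_pow]; push_cast
      gcongr
      · norm_num
      · omega
    have e : 2 / (N : ℝ) = 2 * (1 / N) := by ring
    rw [e]; linarith
  -- neighbours of odd indices
  have hodd : ∀ i ≤ N, ¬ Even i → 1 ≤ i ∧ i + 1 ≤ N := by
    intro i hi h
    refine ⟨?_, ?_⟩
    · rcases Nat.eq_zero_or_pos i with h0 | h0
      · subst h0; simp at h
      · exact h0
    · rcases hi.lt_or_eq with h1 | h1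
      · exact h1
      · subst h1; exact absurd hNe h
  have hs1' : ∀ x ∈ unitInterval, 0 ≤ (1 + s x) / 2 ∧ (1 + s x) / 2 ≤ 1 := fun x hx => by
    have := hs1 x hx; have := hs2 x hx
    constructor <;> linarith
  -- closeness of nodes
  have hclose : ∀ x ∈ unitInterval, ∀ y ∈ unitInterval, ∀ i ≤ N, |(i : ℝ) / N - y| ≤ 1 / N →
      |vnode N g s i x - g x y| ≤ η₂ ∧ |vnodex N g gx s s' i x - gx x y| ≤ η := by
    intro x hx y hy i hi h
    have hη23 : η₂ ≤ η₂ * (3 + S) := by nlinarith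
    have h12 : 1 / (N : ℝ) ≤ 2 / N := by gcongr; norm_num
    by_cases hev : Even i
    · simp only [vnode, vnodex, hev, if_true]
      have := hunif x hx y hy _ (node_mem hN hi) (h.trans (h12.trans hNδ))
      exact ⟨this.1, this.2.trans (hη23.trans hη₂2)⟩
    · obtain ⟨ho1, ho2⟩ := hodd i hi hev
      simp only [vnode, vnodex, hev, if_false]
      have m1 := node_mem hN (show i - 1 ≤ N by omega)
      have m2 := node_mem hN ho2
      have h' := abs_le.1 h
      have e2 : (2 : ℝ) / N = 1 / N + 1 / N := by ring
      have p1 : |((i - 1 : ℕ) : ℝ) / N - y| ≤ δ := by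
        refine le_trans ?_ hNδ
        rw [Nat.cast_sub ho1, sub_div, abs_le]; push_cast
        constructor <;> linarith [show 0 < 1 / (N : ℝ) by positivity]
      have p2 : |((i + 1 : ℕ) : ℝ) / N - y| ≤ δ := by
        refine le_trans ?_ hNδ
        push_cast
        rw [add_div, abs_le]
        constructor <;> linarith [show 0 < 1 / (N : ℝ) by positivity]
      obtain ⟨q1, q1'⟩ := hunif x hx y hy _ m1 p1
      obtain ⟨q2, q2'⟩ := hunif x hx y hy _ m2 p2
      obtain ⟨t0, t1⟩ := hs1' x hx
      set t := (1 + s x) / 2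
      set A := g x ((i - 1 : ℕ) / N)
      set B := g x ((i + 1 : ℕ) / N)
      set A' := gx x ((i - 1 : ℕ) / N)
      set B' := gx x ((i + 1 : ℕ) / N)
      have conv : ∀ a b d : ℝ, |a - d| ≤ η₂ → |b - d| ≤ η₂ → |a + t * (b - a) - d| ≤ η₂ := by
        intro a b d ha hb
        rw [abs_le] at *
        constructor <;> nlinarith
      refine ⟨conv _ _ _ q1 q2, ?_⟩
      have r1 := conv _ _ _ q1' q2'
      have r2 : |s' x / 2 * (B - A)| ≤ S * η₂ := by
        have hBA : |B - A| ≤ 2 * η₂ := by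
          rw [abs_le] at *
          constructor <;> linarith
        rw [abs_mul, abs_div, abs_of_pos (zero_lt_two' ℝ)]
        have := hS x hx
        calc |s' x| / 2 * |B - A| ≤ S / 2 * (2 * η₂) := by gcongr
          _ = S * η₂ := by ring
      calc _ = |(A' + t * (B' - A') - gx x y) + s' x / 2 * (B - A)| := by congr 1; ring
        _ ≤ η₂ + S * η₂ := (abs_add_le _ _).trans (add_le_add r1 r2)
        _ ≤ η := by nlinarith
  have hWb : ∀ x ∈ unitInterval, ∀ a b : ℕ, b ≤ N → b = a + 2 →
      c / N ≤ (g x (b / N) - g x (a / N)) / 2 ∧ (g x (b / N) - g x (a / N)) / 2 ≤ L / N := by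
    intro x hx a b hb hab
    have e : (b : ℝ) / N - a / N = 2 / N := by rw [hab]; push_cast; field_simp; ring
    have h := hbl x hx _ (node_mem hN (show a ≤ N by omega)) _ (node_mem hN hb)
      (by have : 0 < 2 / (N : ℝ) := by positivity
          linarith)
    rw [e] at h
    have e1 : c * (2 / N) = 2 * (c / N) := by ring
    have e2 : L * (2 / N) = 2 * (L / N) := by ring
    constructor <;> linarith
  have hinc : ∀ i < N, ∃ W : ℝ → ℝ, (∀ x ∈ unitInterval, c / N ≤ W x ∧ W x ≤ L / N) ∧
        ((∀ x ∈ unitInterval, vnode N g s (i + 1) x - vnode N g s i x = (1 + s x) * W x) ∨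
         (∀ x ∈ unitInterval, vnode N g s (i + 1) x - vnode N g s i x = (1 - s x) * W x)) := by
    intro i hi
    rcases vnode_diff N g s i with ⟨hev, h⟩ | ⟨hev, h⟩
    · refine ⟨_, ?_, Or.inl fun x _ => h x⟩
      intro x hx
      refine hWb x hx i (i + 2) ?_ rfl
      rcases Nat.lt_or_ge (i + 1) N with h1 | h1
      · exact h1
      · have : i + 1 = N := by omega
        rw [← this, Nat.even_add_one] at hNe
        exact absurd hev hNe
    · obtain ⟨ho1, ho2⟩ := hodd i hi.le hev
      refine ⟨_, ?_, Or.inr fun x _ => h x⟩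
      intro x hx
      exact hWb x hx (i - 1) (i + 1) ho2 (by omega)
  have hinc2 : ∀ x ∈ unitInterval, ∀ i < N,
      (ε * c) / N ≤ vnode N g s (i + 1) x - vnode N g s i x ∧
      vnode N g s (i + 1) x - vnode N g s i x ≤ (2 * L) / N := by
    intro x hx i hi
    obtain ⟨W, hW, h⟩ := hinc i hi
    obtain ⟨w1, w2⟩ := hW x hx
    have hcN : 0 < c / N := by positivity
    have key : ∀ u : ℝ, ε ≤ u → u ≤ 2 → (ε * c) / N ≤ u * W x ∧ u * W x ≤ (2 * L) / N := by
      intro u hu hu2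
      rw [mul_div_assoc, mul_div_assoc]
      constructor
      · have : 0 ≤ u := by linarith
        gcongr
      · have : 0 ≤ W x := by linarith
        gcongr
    have := hs1 x hx
    have := hs2 x hx
    rcases h with h | h <;> rw [h x hx] <;> apply key <;> linarith
  have hclose2 : ∀ x ∈ unitInterval, ∀ y ∈ unitInterval,
      |PL N (fun i => vnode N g s i x) y - g x y| ≤ η₂ := fun x hx y hy =>
    PL_close hN _ hy _ _ fun i hi h => (hclose x hx y hy i hi h).1
  have hbih : ∀ x ∈ unitInterval, ∀ y ∈ unitInterval, ∀ z ∈ unitInterval, y < z →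
      C⁻¹ * (z - y) ^ (1 / β) ≤ PL N (fun i => vnode N g s i x) z - PL N (fun i => vnode N g s i x) y
      ∧ PL N (fun i => vnode N g s i x) z - PL N (fun i => vnode N g s i x) y ≤ C * (z - y) ^ β := by
    intro x hx y hy z hz h
    have hb := PL_bilip hN (fun i => vnode N g s i x) (ε * c) (2 * L)
      (fun i hi => (hinc2 x hx i hi).1) (fun i hi => (hinc2 x hx i hi).2) hy hz h.le
    refine hpert _ (g x z - g x y) _ (sub_pos.2 h) hb.1 hb.2 ?_
      (fol_lower hC' hβ0 G hx y hy z hz h) (fol_upper G hx y hy z hz h)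
    have a := abs_le.1 (hclose2 x hx y hy)
    have b := abs_le.1 (hclose2 x hx z hz)
    rw [abs_le]
    constructor <;> linarith
  have hNcast : (N : ℝ) = 2 ^ (n + 1) := by rw [hNdef]; push_cast; ring
  refine ⟨n + 1, fun x y => PL N (fun i => vnode N g s i x) y,
    fun x y => PL N (fun i => vnodex N g gx s s' i x) y, ?_, ?_, ?_⟩
  · refine PL_isFol hN (vnode N g s) (vnodex N g gx s s') ?_ ?_ ?_ ?_ ?_ ?_
      (fun x hx y hy z hz h => (hbih x hx y hy z hz h).1)
      (fun x hx y hy z hz h => (hbih x hx y hy z hz h).2)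
    · intro i hi x hx
      by_cases hev : Even i
      · simp only [funext (vnode.eq_1 N g s i), vnodex, hev, if_true]
        exact G.hasDeriv _ (node_mem hN hi) x hx
      · obtain ⟨ho1, ho2⟩ := hodd i hi hev
        simp only [funext (vnode.eq_1 N g s i), vnodex, hev, if_false]
        have d1 := G.hasDeriv _ (node_mem hN (show i - 1 ≤ N by omega)) x hx
        have d2 := G.hasDeriv _ (node_mem hN ho2) x hx
        have d3 := (((hs x).const_add 1).div_const 2).hasDerivWithinAt (s := unitInterval)
        exact d1.add (d3.mul (d2.sub d1))
    · intro i hi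
      by_cases hev : Even i
      · simp only [funext (vnodex.eq_1 N g gx s s' i), hev, if_true]
        exact fol_fx_cont G (node_mem hN hi)
      · obtain ⟨ho1, ho2⟩ := hodd i hi hev
        simp only [funext (vnodex.eq_1 N g gx s s' i), hev, if_false]
        have m1 := node_mem hN (show i - 1 ≤ N by omega)
        have m2 := node_mem hN ho2
        have c1 := fol_fx_cont G m1
        have c2 := fol_fx_cont G m2
        have c3 : ContinuousOn (fun x => g x (((i - 1 : ℕ) : ℝ) / N)) unitInterval :=
          fun x hx => (G.hasDeriv _ m1 x hx).continuousWithinAt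
        have c4 : ContinuousOn (fun x => g x (((i + 1 : ℕ) : ℝ) / N)) unitInterval :=
          fun x hx => (G.hasDeriv _ m2 x hx).continuousWithinAt
        have c5 : Continuous s := continuous_iff_continuousAt.2 fun x => (hs x).continuousAt
        exact c1.add ((((hs'.div_const 2).continuousOn).mul (c4.sub c3)).add
          ((((continuous_const.add c5).div_const 2).continuousOn).mul (c2.sub c1)))
    · intro i hi
      by_cases hev : Even i
      · simp only [vnode, hev, if_true]
        exact G.eq_id _ (node_mem hN hi)
      · obtain ⟨ho1, ho2⟩ := hodd i hi hev
        simp only [vnode, hev, if_false]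
        rw [G.eq_id _ (node_mem hN (show i - 1 ≤ N by omega)), G.eq_id _ (node_mem hN ho2), hs0,
          Nat.cast_sub ho1]
        push_cast; ring
    · intro x hx
      simp only [vnode, Even.zero, if_true]
      simpa using G.eq_bot x hx
    · intro x hx
      simp only [vnode, hNe, if_true]
      rw [div_self hNr.ne']; exact G.eq_top x hx
    · intro x hx i hi
      have := (hinc2 x hx i hi).1
      have : 0 < (ε * c) / N := by positivity
      linarith
  · intro x hx y hy
    refine ⟨(hclose2 x hx y hy).trans ?_, ?_⟩
    · nlinarith
    · exact PL_close hN _ hy _ _ fun i hi h => (hclose x hx y hy i hi h).2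
  · intro i hi
    rw [← hNdef] at hi
    rw [← hNcast]
    have e1 : ∀ x, PL N (fun i => vnode N g s i x) (((i : ℝ) + 1) / N) = vnode N g s (i + 1) x := by
      intro x
      have := PL_node hN (fun i => vnode N g s i x) (i + 1) hi
      push_cast at this; exact this
    have e2 : ∀ x, PL N (fun i => vnode N g s i x) ((i : ℝ) / N) = vnode N g s i x := fun x =>
      PL_node hN (fun i => vnode N g s i x) i (le_of_lt hi)
    simp only [e1, e2]
    exact hinc i hi

lemma muM_region {C β : ℝ} {f fx : ℝ → ℝ → ℝ} (F : IsFol C β f fx) {n i : ℕ} (hi : i < 2 ^ n) {T : Set ℝ} (hT : MeasurableSet T)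
    (hTI : T ⊆ unitInterval) :
    muM (Pelt f n i ∩ T ×ˢ unitInterval) =
      ∫⁻ x in T, ENNReal.ofReal (f x (((i : ℝ) + 1) / 2 ^ n) - f x ((i : ℝ) / 2 ^ n)) := by
  have hN : 0 < 2 ^ n := by positivity
  have m1 : (i : ℝ) / 2 ^ n ∈ unitInterval := by
    have := node_mem hN hi.le; push_cast at this; exact this
  have m2 : ((i : ℝ) + 1) / 2 ^ n ∈ unitInterval := by
    have := node_mem hN (show i + 1 ≤ 2 ^ n from hi); push_cast at this; exact this
  have c1 : ContinuousOn (fun x => f x ((i : ℝ) / 2 ^ n)) unitInterval :=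
    fun x hx => (F.hasDeriv _ m1 x hx).continuousWithinAt
  have c2 : ContinuousOn (fun x => f x (((i : ℝ) + 1) / 2 ^ n)) unitInterval :=
    fun x hx => (F.hasDeriv _ m2 x hx).continuousWithinAt
  set u : ℝ → ℝ := fun x => f x ((i : ℝ) / 2 ^ n) with hu
  set w : ℝ → ℝ := fun x => f x (((i : ℝ) + 1) / 2 ^ n) with hw
  set U : ℝ → ℝ := IccExtend (zero_le_one' ℝ) ((Icc (0:ℝ) 1).domRestrict u) with hU
  set V : ℝ → ℝ := IccExtend (zero_le_one' ℝ) ((Icc (0:ℝ) 1).domRestrict w) with hV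
  have cU : Continuous U := (continuousOn_iff_continuous_domRestrict.1 c1).Icc_extend'
  have cV : Continuous V := (continuousOn_iff_continuous_domRestrict.1 c2).Icc_extend'
  have eU : ∀ x ∈ T, U x = u x := fun x hx => by
    rw [hU, IccExtend_of_mem _ _ (hTI hx)]; rfl
  have eV : ∀ x ∈ T, V x = w x := fun x hx => by
    rw [hV, IccExtend_of_mem _ _ (hTI hx)]; rfl
  have hMSq : MeasurableSet MSq := measurableSet_Icc.prod measurableSet_Icc
  have hset : Pelt f n i ∩ T ×ˢ unitInterval ∩ MSq =
      {p : ℝ × ℝ | p.1 ∈ T ∧ U p.1 ≤ p.2 ∧ p.2 < V p.1} := by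
    ext ⟨x, y⟩
    simp only [Pelt, MSq, mem_inter_iff, mem_ofPred_eq, mem_prod]
    constructor
    · rintro ⟨⟨⟨h1, h2, h3⟩, h4, h5⟩, -⟩
      exact ⟨h4, by rw [eU x h4]; exact h2, by rw [eV x h4]; exact h3⟩
    · rintro ⟨h1, h2, h3⟩
      rw [eU x h1] at h2
      rw [eV x h1] at h3
      have hx := hTI h1
      have hy : y ∈ unitInterval :=
        ⟨(F.mapsTo x hx _ m1).1.trans h2, h3.le.trans (F.mapsTo x hx _ m2).2⟩
      exact ⟨⟨⟨hx, h2, h3⟩, h1, hy⟩, hx, hy⟩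
  have hmeas : MeasurableSet {p : ℝ × ℝ | p.1 ∈ T ∧ U p.1 ≤ p.2 ∧ p.2 < V p.1} := by
    refine MeasurableSet.inter (measurable_fst hT) (MeasurableSet.inter ?_ ?_)
    · exact measurableSet_le (cU.measurable.comp measurable_fst) measurable_snd
    · exact measurableSet_lt measurable_snd (cV.measurable.comp measurable_fst)
  unfold muM
  rw [Measure.restrict_apply' hMSq, hset, Measure.volume_eq_prod, Measure.prod_apply hmeas,
    ← lintegral_indicator hT]
  refine lintegral_congr fun x => ?_
  by_cases hx : x ∈ T
  · rw [indicator_of_mem hx]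
    have : Prod.mk x ⁻¹' {p : ℝ × ℝ | p.1 ∈ T ∧ U p.1 ≤ p.2 ∧ p.2 < V p.1} = Ico (U x) (V x) := by
      ext y; simp [hx]
    rw [this, Real.volume_Ico, eU x hx, eV x hx]
  · rw [indicator_of_notMem hx]
    have : Prod.mk x ⁻¹' {p : ℝ × ℝ | p.1 ∈ T ∧ U p.1 ≤ p.2 ∧ p.2 < V p.1} = ∅ := by
      ext y; simp [hx]
    rw [this, measure_empty]

lemma lint_le {D : ℝ → ℝ} {S : Set ℝ} (hS : MeasurableSet S) {K l : ℝ} (hK : 0 ≤ K)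
    (h : ∀ x ∈ S, D x ≤ K) (hl : volume S ≤ ENNReal.ofReal l) :
    ∫⁻ x in S, ENNReal.ofReal (D x) ≤ ENNReal.ofReal (K * l) := by
  calc _ ≤ ∫⁻ x in S, ENNReal.ofReal K :=
        setLIntegral_mono' hS fun x hx => ENNReal.ofReal_le_ofReal (h x hx)
    _ = ENNReal.ofReal K * volume S := setLIntegral_const _ _
    _ ≤ ENNReal.ofReal K * ENNReal.ofReal l := by gcongr
    _ = _ := (ENNReal.ofReal_mul hK).symm

lemma lint_ge {D : ℝ → ℝ} {S : Set ℝ} (hS : MeasurableSet S) {K l : ℝ} (hK : 0 ≤ K)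
    (h : ∀ x ∈ S, K ≤ D x) (hl : ENNReal.ofReal l ≤ volume S) :
    ENNReal.ofReal (K * l) ≤ ∫⁻ x in S, ENNReal.ofReal (D x) := by
  calc ENNReal.ofReal (K * l) = ENNReal.ofReal K * ENNReal.ofReal l := ENNReal.ofReal_mul hK
    _ ≤ ENNReal.ofReal K * volume S := by gcongr
    _ = ∫⁻ x in S, ENNReal.ofReal K := (setLIntegral_const _ _).symm
    _ ≤ _ := setLIntegral_mono' hS fun x hx => ENNReal.ofReal_le_ofReal (h x hx)

lemma ratio_lt {X Y : ℝ≥0∞} {a b : ℝ} {m : ℕ} (hm : 1 ≤ m) (hX : X ≤ ENNReal.ofReal a)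
    (hY : ENNReal.ofReal b ≤ Y) (ha : 0 ≤ a) (hYt : Y ≠ ⊤) (hab : m * a < b) :
    X / (X + Y) < 1 / (m : ℝ≥0∞) := by
  have hb : 0 < b := lt_of_le_of_lt (by positivity) hab
  have hXt : X ≠ ⊤ := ne_top_of_le_ne_top ENNReal.ofReal_ne_top hX
  have hY0 : 0 < Y := lt_of_lt_of_le (ENNReal.ofReal_pos.2 hb) hY
  have hT0 : X + Y ≠ 0 := by simp [hY0.ne']
  have hTt : X + Y ≠ ⊤ := ENNReal.add_ne_top.2 ⟨hXt, hYt⟩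
  have hm0 : (m : ℝ≥0∞) ≠ 0 := by simp; omega
  have hmt : (m : ℝ≥0∞) ≠ ⊤ := ENNReal.natCast_ne_top m
  have h1 : (m : ℝ≥0∞) * X < Y := by
    calc (m : ℝ≥0∞) * X ≤ m * ENNReal.ofReal a := by gcongr
      _ = ENNReal.ofReal (m * a) := by
        rw [ENNReal.ofReal_mul (by positivity), ENNReal.ofReal_natCast]
      _ < ENNReal.ofReal b := (ENNReal.ofReal_lt_ofReal_iff hb).2 hab
      _ ≤ Y := hY
  rw [ENNReal.div_lt_iff (Or.inl hT0) (Or.inl hTt), one_div]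
  calc X = (m : ℝ≥0∞)⁻¹ * (m * X) := by
        rw [← mul_assoc, ENNReal.inv_mul_cancel hm0 hmt, one_mul]
    _ < (m : ℝ≥0∞)⁻¹ * (X + Y) := by
        rw [ENNReal.mul_lt_mul_iff_right (ENNReal.inv_ne_zero.2 hmt) (ENNReal.inv_ne_top.2 hm0)]
        exact lt_of_lt_of_le h1 le_add_self

lemma ratio_gt {X Y : ℝ≥0∞} {m : ℕ} (hm : 1 ≤ m) (h0 : X + Y ≠ 0) (ht : X + Y ≠ ⊤)
    (h : Y / (X + Y) < 1 / (m : ℝ≥0∞)) : 1 - 1 / (m : ℝ≥0∞) < X / (X + Y) := by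
  have e : X / (X + Y) + Y / (X + Y) = 1 := by
    rw [← ENNReal.add_div, ENNReal.div_self h0 ht]
  have hXt : X / (X + Y) ≠ ⊤ := by
    intro h'; rw [h'] at e; simp at e
  have hlt : 1 < X / (X + Y) + 1 / (m : ℝ≥0∞) := by
    calc (1 : ℝ≥0∞) = X / (X + Y) + Y / (X + Y) := e.symm
      _ < _ := ENNReal.add_lt_add_left hXt h
  have hc : 1 / (m : ℝ≥0∞) ≤ 1 := by
    rw [one_div]; exact ENNReal.inv_le_one.2 (by exact_mod_cast hm)
  exact ENNReal.sub_lt_of_lt_add hc hlt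

/-- The switching function. -/
lemma exists_switch {b₁ b₂ τ : ℝ} (hb₁ : 0 < b₁) (hτ : 0 < τ) (hτ1 : τ ≤ b₁) (hτ2 : τ < 1) :
    ∃ s s' : ℝ → ℝ, (∀ x, HasDerivAt s (s' x) x) ∧ Continuous s' ∧ s 0 = 0 ∧
      (∀ x, τ ≤ 1 + s x) ∧ (∀ x, τ ≤ 1 - s x) ∧
      (∀ x, x ∉ Icc b₁ b₂ → s x ≤ 0) ∧ (∀ x, x ∉ Icc b₁ b₂ → τ ≤ x → 1 + s x ≤ τ) ∧
      (∀ x, b₁ + τ ≤ x → x ≤ b₂ - τ → s x = 1 - τ) := by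
  set q : ℝ → ℝ := fun x => Real.smoothTransition (x / τ) with hq
  set r : ℝ → ℝ := fun x =>
    Real.smoothTransition ((x - b₁) / τ) * Real.smoothTransition ((b₂ - x) / τ) with hr
  set s : ℝ → ℝ := fun x => (1 - τ) * (2 * r x - q x) with hs
  have hcd : ContDiff ℝ 1 s := by
    have h : ContDiff ℝ 1 Real.smoothTransition := Real.smoothTransition.contDiff (n := 1)
    have h1 : ContDiff ℝ 1 q := h.comp (by fun_prop)
    have h2 : ContDiff ℝ 1 r := (h.comp (by fun_prop)).mul (h.comp (by fun_prop))
    exact contDiff_const.mul ((contDiff_const.mul h2).sub h1)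
  have q0 : ∀ x, 0 ≤ q x := fun x => Real.smoothTransition.nonneg _
  have q1 : ∀ x, q x ≤ 1 := fun x => Real.smoothTransition.le_one _
  have r0 : ∀ x, 0 ≤ r x := fun x =>
    mul_nonneg (Real.smoothTransition.nonneg _) (Real.smoothTransition.nonneg _)
  have r1 : ∀ x, r x ≤ 1 := fun x =>
    mul_le_one₀ (Real.smoothTransition.le_one _) (Real.smoothTransition.nonneg _)
      (Real.smoothTransition.le_one _)
  have qone : ∀ x, τ ≤ x → q x = 1 := fun x hx =>
    Real.smoothTransition.one_of_one_le (by rwa [one_le_div hτ])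
  have rzero : ∀ x, x ∉ Icc b₁ b₂ → r x = 0 := by
    intro x hx
    simp only [hr]
    rcases lt_or_ge x b₁ with h | h
    · rw [Real.smoothTransition.zero_of_nonpos
        (div_nonpos_of_nonpos_of_nonneg (by linarith) hτ.le), zero_mul]
    · have h2 : b₂ < x := by
        by_contra h'
        exact hx ⟨h, not_lt.1 h'⟩
      rw [Real.smoothTransition.zero_of_nonpos (x := (b₂ - x) / τ)
        (div_nonpos_of_nonpos_of_nonneg (by linarith) hτ.le), mul_zero]
  have h1τ : 0 < 1 - τ := by linarith
  refine ⟨s, deriv s, fun x => (hcd.differentiable (by norm_num) x).hasDerivAt,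
    hcd.continuous_deriv le_rfl, ?_, ?_, ?_, ?_, ?_, ?_⟩
  · have : r 0 = 0 := rzero 0 (fun h => by linarith [h.1])
    simp only [hs, this]
    simp [hq]
  · intro x
    have := q1 x; have := r0 x
    simp only [hs]; nlinarith
  · intro x
    simp only [hs]
    rcases le_total τ x with h | h
    · rw [qone x h]; have := r1 x; nlinarith
    · rcases h.lt_or_eq with h | h
      · rw [rzero x (fun h' => by linarith [h'.1])]; have := q0 x; nlinarith
      · rw [qone x h.ge]; have := r1 x; nlinarith
  · intro x hx
    simp only [hs]; rw [rzero x hx]; have := q0 x; nlinarith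
  · intro x hx h
    simp only [hs]; rw [rzero x hx, qone x h]; linarith
  · intro x h1 h2
    have : r x = 1 := by
      simp only [hr]
      rw [Real.smoothTransition.one_of_one_le, Real.smoothTransition.one_of_one_le, one_mul]
      · rw [one_le_div hτ]; linarith
      · rw [one_le_div hτ]; linarith
    simp only [hs]; rw [this, qone x (by linarith)]; ring

lemma muM_Pelt {C β : ℝ} {f fx : ℝ → ℝ → ℝ}
    (F : IsFol C β f fx) {n i : ℕ} (hi : i < 2 ^ n) :
    muM (Pelt f n i) = ∫⁻ x in unitInterval,
      ENNReal.ofReal (f x (((i : ℝ) + 1) / 2 ^ n) - f x ((i : ℝ) / 2 ^ n)) := by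
  rw [← muM_region F hi measurableSet_Icc subset_rfl]
  have hMSq : MeasurableSet MSq := measurableSet_Icc.prod measurableSet_Icc
  unfold muM
  rw [Measure.restrict_apply' hMSq, Measure.restrict_apply' hMSq, inter_assoc]
  congr 2
  exact (inter_self MSq).symm

/-- The measure-theoretic conclusion for one partition element. -/
lemma cell_ratio {b₁ b₂ τ c L w : ℝ} {m : ℕ} (hm : 1 ≤ m) (hb₁ : 0 < b₁) (hb : b₁ < b₂)
    (hb₂ : b₂ < 1) (hτ : 0 < τ) (hc : 0 < c) (hL : 0 < L) (hw : 0 < w)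
    (hτ0 : τ ≤ b₁) (hτ1 : 4 * τ ≤ b₂ - b₁) (hτ2 : τ * (8 * m * L) ≤ c * (b₂ - b₁))
    (hτ3 : τ * (10 * m * L) ≤ c * b₁)
    (s W D : ℝ → ℝ)
    (hs1 : ∀ x, τ ≤ 1 + s x) (hs2 : ∀ x, τ ≤ 1 - s x)
    (hs3 : ∀ x, x ∉ Icc b₁ b₂ → s x ≤ 0) (hs4 : ∀ x, x ∉ Icc b₁ b₂ → τ ≤ x → 1 + s x ≤ τ)
    (hs5 : ∀ x, b₁ + τ ≤ x → x ≤ b₂ - τ → s x = 1 - τ)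
    (hW : ∀ x ∈ unitInterval, c * w ≤ W x ∧ W x ≤ L * w)
    (hD : (∀ x ∈ unitInterval, D x = (1 + s x) * W x) ∨
      (∀ x ∈ unitInterval, D x = (1 - s x) * W x)) :
    (∫⁻ x in Icc b₁ b₂, ENNReal.ofReal (D x)) / (∫⁻ x in unitInterval, ENNReal.ofReal (D x))
        < 1 / (m : ℝ≥0∞) ∨
    1 - 1 / (m : ℝ≥0∞) <
      (∫⁻ x in Icc b₁ b₂, ENNReal.ofReal (D x)) / (∫⁻ x in unitInterval, ENNReal.ofReal (D x)) := by
  have hsub : Icc b₁ b₂ ⊆ unitInterval := Icc_subset_Icc hb₁.le hb₂.le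
  have hU : MeasurableSet (unitInterval \ Icc b₁ b₂) := measurableSet_Icc.diff measurableSet_Icc
  have hsplit : ∫⁻ x in unitInterval, ENNReal.ofReal (D x) =
      (∫⁻ x in Icc b₁ b₂, ENNReal.ofReal (D x)) +
        ∫⁻ x in unitInterval \ Icc b₁ b₂, ENNReal.ofReal (D x) := by
    rw [← lintegral_union hU disjoint_sdiff_right, union_diff_cancel hsub]
  have hcw : 0 < c * w := by positivity
  have hLw : 0 < L * w := by positivity
  have hWnn : ∀ x ∈ unitInterval, 0 ≤ W x := fun x hx => hcw.le.trans (hW x hx).1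
  have hm' : (1 : ℝ) ≤ m := by exact_mod_cast hm
  have hDle : ∀ x ∈ unitInterval, D x ≤ 2 * (L * w) := by
    intro x hx
    have := hs1 x; have := hs2 x
    have h1 := hWnn x hx
    have h2 := (hW x hx).2
    rcases hD with h | h <;> rw [h x hx] <;> nlinarith
  have hfin : ∫⁻ x in unitInterval, ENNReal.ofReal (D x) ≠ ⊤ := by
    refine ne_top_of_le_ne_top ENNReal.ofReal_ne_top
      (lint_le (l := 1) measurableSet_Icc (by positivity) hDle ?_)
    simp [Real.volume_Icc]
  set A := ∫⁻ x in Icc b₁ b₂, ENNReal.ofReal (D x) with hA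
  set B := ∫⁻ x in unitInterval \ Icc b₁ b₂, ENNReal.ofReal (D x) with hB
  rw [hsplit] at hfin ⊢
  obtain ⟨hAt, hBt⟩ := ENNReal.add_ne_top.1 hfin
  rcases hD with hD | hD
  · right
    have hBle : B ≤ ENNReal.ofReal (L * w * τ + τ * (L * w) * 1) := by
      have hcov : unitInterval \ Icc b₁ b₂ ⊆ Icc 0 τ ∪ (Icc τ 1 \ Icc b₁ b₂) := by
        rintro x ⟨hx, hx'⟩
        rcases le_total x τ with h | h
        · exact Or.inl ⟨hx.1, h⟩
        · exact Or.inr ⟨⟨h, hx.2⟩, hx'⟩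
      have hcov2 : unitInterval \ Icc b₁ b₂ ⊆ (Ico 0 τ) ∪ (Icc τ 1 \ Icc b₁ b₂) := by
        rintro x ⟨hx, hx'⟩
        rcases lt_or_ge x τ with h | h
        · exact Or.inl ⟨hx.1, h⟩
        · exact Or.inr ⟨⟨h, hx.2⟩, hx'⟩
      calc B ≤ ∫⁻ x in (Ico 0 τ) ∪ (Icc τ 1 \ Icc b₁ b₂), ENNReal.ofReal (D x) :=
            lintegral_mono_set hcov2
        _ ≤ (∫⁻ x in Ico 0 τ, ENNReal.ofReal (D x)) +
            ∫⁻ x in Icc τ 1 \ Icc b₁ b₂, ENNReal.ofReal (D x) := lintegral_union_le _ _ _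
        _ ≤ ENNReal.ofReal (L * w * τ) + ENNReal.ofReal (τ * (L * w) * 1) := by
            refine add_le_add ?_ ?_
            · refine lint_le measurableSet_Ico hLw.le ?_ ?_
              · intro x hx
                have hxU : x ∈ unitInterval := ⟨hx.1, by linarith [hx.2]⟩
                have := hs3 x (fun h => by linarith [h.1, hx.2])
                rw [hD x hxU]
                have := hWnn x hxU
                have := (hW x hxU).2
                nlinarith
              · simp [Real.volume_Ico]
            · refine lint_le (measurableSet_Icc.diff measurableSet_Icc) (by positivity) ?_ ?_
              · rintro x ⟨hx, hx'⟩
                have hxU : x ∈ unitInterval := ⟨by linarith [hx.1], hx.2⟩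
                have h4 := hs4 x hx' hx.1
                rw [hD x hxU]
                have := hWnn x hxU
                have := (hW x hxU).2
                calc (1 + s x) * W x ≤ τ * W x := by gcongr
                  _ ≤ τ * (L * w) := by gcongr
              · refine (measure_mono diff_subset).trans ?_
                rw [Real.volume_Icc]
                exact ENNReal.ofReal_le_ofReal (by linarith)
        _ = _ := (ENNReal.ofReal_add (by positivity) (by positivity)).symm
    have hAge : ENNReal.ofReal (c * w * (b₂ - b₁ - 2 * τ)) ≤ A := by
      calc _ ≤ ∫⁻ x in Icc (b₁ + τ) (b₂ - τ), ENNReal.ofReal (D x) := by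
            refine lint_ge measurableSet_Icc hcw.le ?_ ?_
            · intro x hx
              have hxU : x ∈ unitInterval := hsub ⟨by linarith [hx.1], by linarith [hx.2]⟩
              rw [hD x hxU, hs5 x hx.1 hx.2]
              have := (hW x hxU).1
              have := hWnn x hxU
              nlinarith
            · rw [Real.volume_Icc]
              exact ENNReal.ofReal_le_ofReal (by linarith)
        _ ≤ A := lintegral_mono_set (Icc_subset_Icc (by linarith) (by linarith))
    have hpos : 0 < c * w * (b₂ - b₁ - 2 * τ) := mul_pos hcw (by linarith)
    have hA0 : A ≠ 0 := (lt_of_lt_of_le (ENNReal.ofReal_pos.2 hpos) hAge).ne'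
    refine ratio_gt hm (by simp [hA0]) hfin ?_
    rw [add_comm A B]
    refine ratio_lt hm hBle hAge (by positivity) hAt ?_
    have e1 : (m : ℝ) * (L * w * τ + τ * (L * w) * 1) = w / 4 * (τ * (8 * m * L)) := by ring
    rw [e1]
    calc w / 4 * (τ * (8 * m * L)) ≤ w / 4 * (c * (b₂ - b₁)) := by gcongr
      _ < c * w * (b₂ - b₁ - 2 * τ) := by nlinarith
  · left
    have hAle : A ≤ ENNReal.ofReal (2 * (L * w) * τ + (τ * (L * w) * 1 + 2 * (L * w) * τ)) := by
      have hcov : Icc b₁ b₂ ⊆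
          Icc b₁ (b₁ + τ) ∪ (Icc (b₁ + τ) (b₂ - τ) ∪ Icc (b₂ - τ) b₂) := by
        intro x hx
        rcases le_total x (b₁ + τ) with h | h
        · exact Or.inl ⟨hx.1, h⟩
        · rcases le_total x (b₂ - τ) with h' | h'
          · exact Or.inr (Or.inl ⟨h, h'⟩)
          · exact Or.inr (Or.inr ⟨h', hx.2⟩)
      calc A ≤ ∫⁻ x in Icc b₁ (b₁ + τ) ∪ (Icc (b₁ + τ) (b₂ - τ) ∪ Icc (b₂ - τ) b₂),
              ENNReal.ofReal (D x) := lintegral_mono_set hcov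
        _ ≤ (∫⁻ x in Icc b₁ (b₁ + τ), ENNReal.ofReal (D x)) +
            ((∫⁻ x in Icc (b₁ + τ) (b₂ - τ), ENNReal.ofReal (D x)) +
              ∫⁻ x in Icc (b₂ - τ) b₂, ENNReal.ofReal (D x)) :=
            (lintegral_union_le _ _ _).trans (add_le_add le_rfl (lintegral_union_le _ _ _))
        _ ≤ ENNReal.ofReal (2 * (L * w) * τ) +
            (ENNReal.ofReal (τ * (L * w) * 1) + ENNReal.ofReal (2 * (L * w) * τ)) := by
            refine add_le_add ?_ (add_le_add ?_ ?_)
            · refine lint_le measurableSet_Icc (by positivity) ?_ ?_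
              · intro x hx
                exact hDle x (hsub ⟨hx.1, by linarith [hx.2]⟩)
              · rw [Real.volume_Icc]
                exact ENNReal.ofReal_le_ofReal (by linarith)
            · refine lint_le measurableSet_Icc (by positivity) ?_ ?_
              · intro x hx
                have hxU : x ∈ unitInterval := hsub ⟨by linarith [hx.1], by linarith [hx.2]⟩
                rw [hD x hxU, hs5 x hx.1 hx.2]
                have := (hW x hxU).2
                nlinarith
              · rw [Real.volume_Icc]
                exact ENNReal.ofReal_le_ofReal (by linarith)
            · refine lint_le measurableSet_Icc (by positivity) ?_ ?_
              · intro x hx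
                exact hDle x (hsub ⟨by linarith [hx.1], hx.2⟩)
              · rw [Real.volume_Icc]
                exact ENNReal.ofReal_le_ofReal (by linarith)
        _ = _ := by
            rw [← ENNReal.ofReal_add (by positivity) (by positivity),
              ← ENNReal.ofReal_add (by positivity) (by positivity)]
    have hBge : ENNReal.ofReal (c * w * b₁) ≤ B := by
      calc _ ≤ ∫⁻ x in Ico 0 b₁, ENNReal.ofReal (D x) := by
            refine lint_ge measurableSet_Ico hcw.le ?_ ?_
            · intro x hx
              have hxU : x ∈ unitInterval := ⟨hx.1, by linarith [hx.2]⟩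
              have := hs3 x (fun h => by linarith [h.1, hx.2])
              rw [hD x hxU]
              have := (hW x hxU).1
              have := hWnn x hxU
              nlinarith
            · simp [Real.volume_Ico]
        _ ≤ B := lintegral_mono_set fun x hx =>
            ⟨⟨hx.1, by linarith [hx.2]⟩, fun h => by linarith [h.1, hx.2]⟩
    refine ratio_lt hm hAle hBge (by positivity) hBt ?_
    have e1 : (m : ℝ) * (2 * (L * w) * τ + (τ * (L * w) * 1 + 2 * (L * w) * τ))
        = w / 2 * (τ * (10 * m * L)) := by ring
    rw [e1]
    calc w / 2 * (τ * (10 * m * L)) ≤ w / 2 * (c * b₁) := by gcongr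
      _ < c * w * b₁ := by nlinarith [mul_pos hcw hb₁]

theorem stmt14 (C C' β α : ℝ) (hC' : 1 < C') (hCC : C' < C)
    (hα : 0 ≤ α) (hαβ : α < β) (hβ : β < 1)
    (F₃ : Fol C' β) (hC2 : ∀ x ∈ unitInterval, ContDiffOn ℝ 2 (F₃.f x) unitInterval)
    (ξ : ℝ) (hξ : 0 < ξ) (m : ℕ) (hm : 1 ≤ m)
    (b₁ b₂ : ℚ) (hb₁ : 0 < (b₁ : ℝ)) (hb : (b₁ : ℝ) ≤ (b₂ : ℝ)) (hb₂ : (b₂ : ℝ) < 1) :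
    ∃ n : ℕ, ∃ Ft : Fol C β,
      dalpha α Ft.f Ft.fx F₃.f F₃.fx < ξ / 3 ∧
      Ft ∈ Aset C β n m (b₁ : ℝ) (b₂ : ℝ) ∧ Ft ∈ Bset C β m (b₁ : ℝ) (b₂ : ℝ) := by
  suffices h : ∃ n : ℕ, ∃ Ft : Fol C β,
      dalpha α Ft.f Ft.fx F₃.f F₃.fx < ξ / 3 ∧ Ft ∈ Aset C β n m (b₁ : ℝ) (b₂ : ℝ) by
    obtain ⟨n, Ft, h1, h2⟩ := h
    exact ⟨n, Ft, h1, h2, mem_iUnion.2 ⟨n, h2⟩⟩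
  have hC0 : 0 < C' := by linarith
  have hCpos : 0 < C := by linarith
  have hβ0 : 0 < β := by linarith
  have F₃C := F₃.isFol.mono_const hC0 hCC.le
  obtain ⟨η, hη, hdist⟩ := dalpha_small (C := C) hCpos hα hαβ (ε := ξ / 3) (by positivity)
  obtain ⟨g, gx, c, L, G, hc, hL, hbl, hgclose⟩ :=
    smoothing hC0 hβ0 hβ F₃.isFol (η / 2) (by positivity)
  have htri : ∀ f fx : ℝ → ℝ → ℝ, IsFol C β f fx →
      (∀ x ∈ unitInterval, ∀ y ∈ unitInterval,
        |f x y - g x y| ≤ η / 2 ∧ |fx x y - gx x y| ≤ η / 2) →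
      dalpha α f fx F₃.f F₃.fx < ξ / 3 := by
    intro f fx F h
    refine hdist _ _ _ _ F F₃C fun x hx y hy => ?_
    obtain ⟨a1, a2⟩ := h x hx y hy
    obtain ⟨a3, a4⟩ := hgclose x hx y hy
    exact ⟨(abs_sub_le _ (g x y) _).trans (by linarith),
      (abs_sub_le _ (gx x y) _).trans (by linarith)⟩
  have hsub : Icc (b₁ : ℝ) b₂ ⊆ unitInterval := Icc_subset_Icc hb₁.le hb₂.le
  have hmR : (1 : ℝ) ≤ m := by exact_mod_cast hm
  rcases hb.lt_or_eq with hlt | heq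
  · -- nondegenerate interval
    obtain ⟨τ, hτ, t1, t2, t3, t4⟩ : ∃ τ : ℝ, 0 < τ ∧ τ ≤ b₁ ∧ 4 * τ ≤ b₂ - b₁ ∧
        τ * (8 * m * L) ≤ c * ((b₂ : ℝ) - b₁) ∧ τ * (10 * m * L) ≤ c * b₁ := by
      have hd : 0 < (b₂ : ℝ) - b₁ := by linarith
      refine ⟨min (min (b₁ : ℝ) (((b₂ : ℝ) - b₁) / 4))
        (min (c * ((b₂ : ℝ) - b₁) / (8 * m * L)) (c * b₁ / (10 * m * L))), ?_, ?_, ?_, ?_, ?_⟩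
      · refine lt_min (lt_min hb₁ (by linarith)) (lt_min ?_ ?_)
        · exact div_pos (mul_pos hc hd) (by positivity)
        · exact div_pos (mul_pos hc hb₁) (by positivity)
      · exact (min_le_left _ _).trans (min_le_left _ _)
      · have := (min_le_left (min (b₁ : ℝ) (((b₂ : ℝ) - b₁) / 4))
          (min (c * ((b₂ : ℝ) - b₁) / (8 * m * L)) (c * b₁ / (10 * m * L)))).trans
          (min_le_right _ _)
        linarith
      · rw [← le_div_iff₀ (by positivity)]
        exact (min_le_right _ _).trans (min_le_left _ _)
      · rw [← le_div_iff₀ (by positivity)]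
        exact (min_le_right _ _).trans (min_le_right _ _)
    obtain ⟨s, s', hs, hs', hs0, hs1, hs2, hs3, hs4, hs5⟩ :=
      exists_switch (b₂ := (b₂ : ℝ)) hb₁ hτ t1 (by linarith)
    obtain ⟨S, hS⟩ := isCompact_Icc.exists_bound_of_continuousOn (s := unitInterval)
      hs'.continuousOn
    obtain ⟨n, f, fx, F, hclose, hW⟩ := oscillate (S := S) hC0 hCC hβ0 hβ G hc hL hbl s s' hs hs'
      hs0 hτ (fun x _ => hs1 x) (fun x _ => hs2 x) hS (η / 2) (by positivity)
    refine ⟨n, ⟨f, fx, F⟩, htri f fx F hclose, ?_⟩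
    intro i hi
    obtain ⟨W, hW1, hW2⟩ := hW i hi
    simp only [Itilde]
    rw [muM_region F hi measurableSet_Icc hsub, muM_Pelt F hi]
    refine cell_ratio (w := 1 / 2 ^ n) hm hb₁ hlt hb₂ hτ hc hL (by positivity) t1 t2 t3 t4 s W _
      hs1 hs2 hs3 hs4 hs5 ?_ hW2
    intro x hx
    have := hW1 x hx
    rw [mul_one_div, mul_one_div]; exact this
  · -- degenerate interval
    obtain ⟨n, f, fx, F, hclose, -⟩ := oscillate (S := 0) (ε := 1) hC0 hCC hβ0 hβ G hc hL hbl
      (fun _ => 0) (fun _ => 0) (fun x => hasDerivAt_const x 0) continuous_const rfl one_pos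
      (fun x _ => by simp) (fun x _ => by simp) (fun x _ => by simp) (η / 2) (by positivity)
    refine ⟨n, ⟨f, fx, F⟩, htri f fx F hclose, ?_⟩
    intro i hi
    left
    simp only [Itilde]
    rw [muM_region F hi measurableSet_Icc hsub, heq]
    have : ∀ D : ℝ → ℝ≥0∞, ∫⁻ x in Icc (b₂ : ℝ) b₂, D x = 0 := by
      intro D
      rw [Icc_self]
      exact setLIntegral_measure_zero _ _ (by simp)
    rw [this, ENNReal.zero_div]
    simp

end
end

section
/- Let f ∈ ⋂_{m≥1} ⋂_{I} B_{m,I}, where the second intersection is over all closed intervals I ⊆ [0,1] with rational endpoints. Then for every closed interval I ⊆ [0,1] with rational endpoints, for μ̂-almost every y ∈ [0,1], μ_y(I × [0,1]) ∈ {0,1}, where (μ_y) is the Rokhlin disintegration of Lebesgue measure μ on [0,1]² with respect to π_f and μ̂ = (π_f)_*μ. -/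
open MeasureTheory Set Filter Topology
open scoped ENNReal

noncomputable section

lemma fol_continuousOn {C β : ℝ} (hβ0 : 0 < β) (F : Fol C β) {x : ℝ}
    (hx : x ∈ unitInterval) : ContinuousOn (F.f x) (Icc 0 1) := by
  intro y hy
  have h1 : Tendsto (fun z : ℝ => C * |z - y| ^ β) (𝓝[Icc 0 1] y) (𝓝 0) := by
    have hc : Continuous (fun z : ℝ => C * |z - y| ^ β) :=
      continuous_const.mul ((continuous_id.sub continuous_const).abs.rpow_const
        (fun _ => Or.inr hβ0.le))
    have := hc.tendsto y
    simp only [sub_self, abs_zero, Real.zero_rpow hβ0.ne', mul_zero] at this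
    exact this.mono_left nhdsWithin_le_nhds
  rw [ContinuousWithinAt, tendsto_iff_dist_tendsto_zero]
  refine squeeze_zero' (Eventually.of_forall fun _ => dist_nonneg) ?_ h1
  filter_upwards [self_mem_nhdsWithin] with z hz
  rw [Real.dist_eq]
  by_cases hzy : y = z
  · subst hzy
    simp [Real.zero_rpow hβ0.ne']
  · exact F.isFol.upper x hx y hy z hz hzy

lemma fol_strictMonoOn {C β : ℝ} (hC : 1 < C) (hβ0 : 0 < β) (F : Fol C β) {x : ℝ}
    (hx : x ∈ unitInterval) : StrictMonoOn (F.f x) (Icc 0 1) := by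
  refine ContinuousOn.strictMonoOn_of_injOn_Icc zero_le_one ?_ (fol_continuousOn hβ0 F hx) ?_
  · rw [F.isFol.eq_bot x hx, F.isFol.eq_top x hx]; exact zero_le_one
  · intro a ha b hb hab
    by_contra hne
    have h := F.isFol.lower x hx a ha b hb hne
    rw [hab, sub_self, abs_zero] at h
    have h2 : 0 < C⁻¹ * |b - a| ^ (1 / β) := by
      have : 0 < |b - a| := abs_pos.2 (sub_ne_zero.2 (Ne.symm hne))
      positivity
    linarith

lemma muM_univ : muM univ = 1 := by
  rw [muM, Measure.restrict_apply_univ, MSq, Measure.volume_eq_prod, Measure.prod_prod]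
  simp [unitInterval]

lemma quotM_ae {C β : ℝ} (hβ0 : 0 < β) (F : Fol C β) :
    ∀ᵐ y ∂quotM F, y ∈ Ico (0 : ℝ) 1 := by
  by_cases hm : AEMeasurable (projF F.f) muM
  · rw [quotM]
    refine (ae_map_iff hm (p := fun y => y ∈ Ico (0 : ℝ) 1) measurableSet_Ico).2 ?_
    have hM : MeasurableSet MSq := measurableSet_Icc.prod measurableSet_Icc
    rw [muM, ae_restrict_iff' hM]
    have h1 : ∀ᵐ p : ℝ × ℝ, p.2 ≠ 1 := by
      rw [ae_iff]
      have : {a : ℝ × ℝ | ¬ a.2 ≠ 1} = univ ×ˢ {(1 : ℝ)} := by ext; simp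
      rw [this, Measure.volume_eq_prod, Measure.prod_prod]
      simp
    filter_upwards [h1] with p hp hpM
    obtain ⟨hx, hz⟩ := hpM
    have hex : ∃ y ∈ unitInterval, F.f p.1 y = p.2 := by
      have := intermediate_value_Icc (zero_le_one' ℝ) (fol_continuousOn hβ0 F hx)
      rw [F.isFol.eq_bot _ hx, F.isFol.eq_top _ hx] at this
      exact this hz
    have hmem : projF F.f p ∈ unitInterval := Function.invFunOn_mem hex
    have heq : F.f p.1 (projF F.f p) = p.2 := Function.invFunOn_eq hex
    refine ⟨hmem.1, lt_of_le_of_ne hmem.2 ?_⟩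
    intro h
    rw [h, F.isFol.eq_top _ hx] at heq
    exact hp heq.symm
  · rw [quotM, Measure.map_of_not_aemeasurable hm]
    simp

lemma cell_mem {n i : ℕ} (hi : i < 2 ^ n) :
    (i : ℝ) / 2 ^ n ∈ Icc (0 : ℝ) 1 ∧ ((i : ℝ) + 1) / 2 ^ n ∈ Icc (0 : ℝ) 1 := by
  have h2 : (0 : ℝ) < 2 ^ n := by positivity
  have h3 : (i : ℝ) + 1 ≤ 2 ^ n := by exact_mod_cast hi
  refine ⟨⟨by positivity, ?_⟩, ⟨by positivity, ?_⟩⟩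
  · rw [div_le_one h2]; linarith
  · rw [div_le_one h2]; exact h3

lemma Pelt_measurable {C β : ℝ} (F : Fol C β) {n i : ℕ} (hi : i < 2 ^ n) :
    MeasurableSet (Pelt F.f n i) := by
  have key : ∀ y ∈ Icc (0 : ℝ) 1,
      Measurable (indicator (Icc (0 : ℝ) 1) (fun x => F.f x y)) := by
    intro y hy
    have hc : ContinuousOn (fun x => F.f x y) (Icc (0 : ℝ) 1) :=
      fun x hx => (F.isFol.hasDeriv y hy x hx).continuousWithinAt
    rw [← Set.piecewise_eq_indicator]
    exact hc.measurable_piecewise continuousOn_const measurableSet_Icc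
  have ha := (key _ (cell_mem hi).1).comp
    (measurable_fst : Measurable (Prod.fst : ℝ × ℝ → ℝ))
  have hb := (key _ (cell_mem hi).2).comp
    (measurable_fst : Measurable (Prod.fst : ℝ × ℝ → ℝ))
  have heq : Pelt F.f n i = (Prod.fst ⁻¹' Icc (0 : ℝ) 1) ∩
      ({p : ℝ × ℝ | (indicator (Icc (0 : ℝ) 1) (fun x => F.f x ((i : ℝ) / 2 ^ n)) ∘ Prod.fst) p
        ≤ p.2} ∩ {p : ℝ × ℝ | p.2 <
        (indicator (Icc (0 : ℝ) 1) (fun x => F.f x (((i : ℝ) + 1) / 2 ^ n)) ∘ Prod.fst) p}) := by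
    ext p
    simp only [Pelt, mem_setOf_eq, mem_inter_iff, mem_preimage, Function.comp_apply]
    refine and_congr_right fun hp => ?_
    rw [indicator_of_mem hp, indicator_of_mem hp]
  rw [heq]
  exact (measurable_fst measurableSet_Icc).inter
    ((measurableSet_le ha measurable_snd).inter (measurableSet_lt measurable_snd hb))

lemma slice {C β : ℝ} (hC : 1 < C) (hβ0 : 0 < β) (F : Fol C β)
    {ν : ℝ → Measure (ℝ × ℝ)} (hν : IsDisint F ν) {n i : ℕ} (hi : i < 2 ^ n)
    {E : Set (ℝ × ℝ)} (hE : MeasurableSet E) :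
    muM (Pelt F.f n i ∩ E) =
      ∫⁻ y in Ico ((i : ℝ) / 2 ^ n) (((i : ℝ) + 1) / 2 ^ n), ν y E ∂quotM F := by
  obtain ⟨hp, hmeas, hleaf, hdis⟩ := hν
  have hP := Pelt_measurable F hi
  rw [hdis _ (hP.inter hE), ← lintegral_indicator measurableSet_Ico]
  refine lintegral_congr_ae ?_
  filter_upwards [hleaf, quotM_ae hβ0 F] with y hy hyI
  have hyI' : y ∈ Icc (0 : ℝ) 1 := ⟨hyI.1, hyI.2.le⟩
  have := hp y
  by_cases hyJ : y ∈ Ico ((i : ℝ) / 2 ^ n) (((i : ℝ) + 1) / 2 ^ n)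
  · rw [indicator_of_mem hyJ]
    have hsub : Leaf F y ⊆ Pelt F.f n i := by
      rintro _ ⟨x, hx, rfl⟩
      exact ⟨hx, (fol_strictMonoOn hC hβ0 F hx).monotoneOn (cell_mem hi).1 hyI' hyJ.1,
        fol_strictMonoOn hC hβ0 F hx hyI' (cell_mem hi).2 hyJ.2⟩
    have h1 : ν y (Pelt F.f n i) = 1 :=
      le_antisymm prob_le_one (hy ▸ measure_mono hsub)
    have h0 : ν y (Pelt F.f n i)ᶜ = 0 := (prob_compl_eq_zero_iff hP).2 h1
    rw [inter_comm]
    exact measure_inter_conull h0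
  · rw [indicator_of_notMem hyJ]
    have hsub : Leaf F y ⊆ (Pelt F.f n i)ᶜ := by
      rintro _ ⟨x, hx, rfl⟩ ⟨_, h1, h2⟩
      apply hyJ
      exact ⟨((fol_strictMonoOn hC hβ0 F hx).le_iff_le (cell_mem hi).1 hyI').1 h1,
        ((fol_strictMonoOn hC hβ0 F hx).lt_iff_lt hyI' (cell_mem hi).2).1 h2⟩
    have h1 : ν y (Pelt F.f n i)ᶜ = 1 :=
      le_antisymm prob_le_one (hy ▸ measure_mono hsub)
    have h0 : ν y (Pelt F.f n i) = 0 := (prob_compl_eq_one_iff hP).1 h1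
    exact measure_mono_null inter_subset_left h0

lemma cell_bound {C β : ℝ} (hC : 1 < C) (hβ0 : 0 < β) (F : Fol C β)
    {ν : ℝ → Measure (ℝ × ℝ)} (hν : IsDisint F ν) {n m i : ℕ} (hi : i < 2 ^ n) {b₁ b₂ : ℝ}
    (hA : F ∈ Aset C β n m b₁ b₂) :
    ∫⁻ y in Ico ((i : ℝ) / 2 ^ n) (((i : ℝ) + 1) / 2 ^ n),
      ν y (Itilde b₁ b₂) * ν y (Itilde b₁ b₂)ᶜ ∂quotM F ≤
    1 / (m : ℝ≥0∞) * quotM F (Ico ((i : ℝ) / 2 ^ n) (((i : ℝ) + 1) / 2 ^ n)) := by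
  have hI : MeasurableSet (Itilde b₁ b₂) := measurableSet_Icc.prod measurableSet_Icc
  have hp := hν.1
  have hJ : muM (Pelt F.f n i) =
      quotM F (Ico ((i : ℝ) / 2 ^ n) (((i : ℝ) + 1) / 2 ^ n)) := by
    have := slice hC hβ0 F hν hi MeasurableSet.univ
    simpa using this
  have hg := slice hC hβ0 F hν hi hI
  have hh := slice hC hβ0 F hν hi hI.compl
  have hle1 : ∫⁻ y in Ico ((i : ℝ) / 2 ^ n) (((i : ℝ) + 1) / 2 ^ n),
      ν y (Itilde b₁ b₂) * ν y (Itilde b₁ b₂)ᶜ ∂quotM F ≤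
      muM (Pelt F.f n i ∩ Itilde b₁ b₂) := by
    rw [hg]
    exact lintegral_mono fun y => mul_le_of_le_one_right' prob_le_one
  have hle2 : ∫⁻ y in Ico ((i : ℝ) / 2 ^ n) (((i : ℝ) + 1) / 2 ^ n),
      ν y (Itilde b₁ b₂) * ν y (Itilde b₁ b₂)ᶜ ∂quotM F ≤
      muM (Pelt F.f n i ∩ (Itilde b₁ b₂)ᶜ) := by
    rw [hh]
    exact lintegral_mono fun y => mul_le_of_le_one_left' prob_le_one
  rw [← hJ]
  have hfin : muM (Pelt F.f n i) ≠ ∞ :=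
    ((measure_mono (subset_univ _)).trans_lt (by rw [muM_univ]; exact ENNReal.one_lt_top)).ne
  by_cases h0 : muM (Pelt F.f n i) = 0
  · refine hle1.trans ?_
    rw [measure_mono_null inter_subset_left h0]
    exact zero_le
  have hsum : muM (Pelt F.f n i ∩ Itilde b₁ b₂) / muM (Pelt F.f n i) +
      muM (Pelt F.f n i ∩ (Itilde b₁ b₂)ᶜ) / muM (Pelt F.f n i) = 1 := by
    rw [← ENNReal.add_div, ← sdiff_eq, measure_inter_add_sdiff _ hI, ENNReal.div_self h0 hfin]
  rcases hA i hi with h | h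
  · exact hle1.trans ((ENNReal.div_le_iff h0 hfin).1 h.le)
  · refine hle2.trans ((ENNReal.div_le_iff h0 hfin).1 ?_)
    have hfr : muM (Pelt F.f n i ∩ Itilde b₁ b₂) / muM (Pelt F.f n i) ≠ ∞ := by
      intro ht; rw [ht] at hsum; simp at hsum
    have h1 := tsub_le_iff_right.1 h.le
    exact (ENNReal.add_le_add_iff_left hfr).1 (hsum.le.trans h1)

lemma total_bound {C β : ℝ} (hC : 1 < C) (hβ0 : 0 < β) (F : Fol C β)
    {ν : ℝ → Measure (ℝ × ℝ)} (hν : IsDisint F ν) {n m : ℕ} {b₁ b₂ : ℝ}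
    (hA : F ∈ Aset C β n m b₁ b₂) :
    ∫⁻ y, ν y (Itilde b₁ b₂) * ν y (Itilde b₁ b₂)ᶜ ∂quotM F ≤ (m : ℝ≥0∞)⁻¹ := by
  set J : ℕ → Set ℝ := fun i => Ico ((i : ℝ) / 2 ^ n) (((i : ℝ) + 1) / 2 ^ n) with hJdef
  have h2 : (0 : ℝ) < 2 ^ n := by positivity
  have hdisj : Set.PairwiseDisjoint (↑(Finset.range (2 ^ n))) J := by
    intro i _ j _ hij
    refine Set.disjoint_left.2 fun y hy hy' => hij ?_
    simp only [hJdef, mem_Ico, div_le_iff₀ h2, lt_div_iff₀ h2] at hy hy'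
    have a1 : (i : ℝ) < j + 1 := by linarith
    have a2 : (j : ℝ) < i + 1 := by linarith
    have a3 : i < j + 1 := by exact_mod_cast a1
    have a4 : j < i + 1 := by exact_mod_cast a2
    omega
  have hJm : ∀ i ∈ Finset.range (2 ^ n), MeasurableSet (J i) := fun i _ => measurableSet_Ico
  have hcov : ∀ᵐ y ∂quotM F, y ∈ ⋃ i ∈ Finset.range (2 ^ n), J i := by
    filter_upwards [quotM_ae hβ0 F] with y hy
    have hy0 : 0 ≤ y * 2 ^ n := mul_nonneg hy.1 h2.le
    simp only [mem_iUnion, Finset.mem_range, exists_prop]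
    refine ⟨⌊y * 2 ^ n⌋₊, ?_, ?_⟩
    · rw [Nat.floor_lt hy0]
      push_cast
      nlinarith [hy.2]
    · simp only [hJdef, mem_Ico, div_le_iff₀ h2, lt_div_iff₀ h2]
      exact ⟨Nat.floor_le hy0, Nat.lt_floor_add_one _⟩
  have hu : quotM F univ ≤ 1 := by
    by_cases hm : AEMeasurable (projF F.f) muM
    · rw [quotM, Measure.map_apply_of_aemeasurable hm MeasurableSet.univ, preimage_univ, muM_univ]
    · rw [quotM, Measure.map_of_not_aemeasurable hm]; simp
  calc ∫⁻ y, ν y (Itilde b₁ b₂) * ν y (Itilde b₁ b₂)ᶜ ∂quotM F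
      = ∫⁻ y in ⋃ i ∈ Finset.range (2 ^ n), J i,
          ν y (Itilde b₁ b₂) * ν y (Itilde b₁ b₂)ᶜ ∂quotM F := by
        rw [Measure.restrict_eq_self_of_ae_mem hcov]
    _ = ∑ i ∈ Finset.range (2 ^ n), ∫⁻ y in J i,
          ν y (Itilde b₁ b₂) * ν y (Itilde b₁ b₂)ᶜ ∂quotM F :=
        lintegral_biUnion_finset hdisj hJm _
    _ ≤ ∑ i ∈ Finset.range (2 ^ n), 1 / (m : ℝ≥0∞) * quotM F (J i) :=
        Finset.sum_le_sum fun i hi => cell_bound hC hβ0 F hν (Finset.mem_range.1 hi) hA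
    _ = 1 / (m : ℝ≥0∞) * quotM F (⋃ i ∈ Finset.range (2 ^ n), J i) := by
        rw [← Finset.mul_sum, measure_biUnion_finset hdisj hJm]
    _ ≤ 1 / (m : ℝ≥0∞) * 1 := by
        gcongr
        exact (measure_mono (subset_univ _)).trans hu
    _ = (m : ℝ≥0∞)⁻¹ := by simp

/-- If `f ∈ ⋂_{m≥1} ⋂_I B_{m,I}` (intersection over all closed subintervals
of `[0,1]` with rational endpoints), then for every such interval `I`, for `μ̂`-a.e. `y`,
`μ_y(I × [0,1]) ∈ {0,1}`, where `(μ_y)` is a Rokhlin disintegration of Lebesgue measure on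
the square w.r.t. `π_f`. -/
theorem stmt17 (C β : ℝ) (hC : 1 < C) (hβ0 : 0 < β) (hβ : β < 1)
    (F : Fol C β)
    (hF : ∀ m : ℕ, 1 ≤ m → ∀ b₁ b₂ : ℚ, 0 ≤ b₁ → b₁ ≤ b₂ → b₂ ≤ 1 →
      F ∈ Bset C β m (b₁ : ℝ) (b₂ : ℝ))
    (ν : ℝ → Measure (ℝ × ℝ)) (hν : IsDisint F ν)
    (b₁ b₂ : ℚ) (hb₁ : 0 ≤ b₁) (hb : b₁ ≤ b₂) (hb₂ : b₂ ≤ 1) :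
    ∀ᵐ y ∂quotM F,
      ν y (Itilde (b₁ : ℝ) (b₂ : ℝ)) = 0 ∨ ν y (Itilde (b₁ : ℝ) (b₂ : ℝ)) = 1 := by
  have hI : MeasurableSet (Itilde (b₁ : ℝ) (b₂ : ℝ)) := measurableSet_Icc.prod measurableSet_Icc
  have hz : ∫⁻ y, ν y (Itilde (b₁ : ℝ) (b₂ : ℝ)) * ν y (Itilde (b₁ : ℝ) (b₂ : ℝ))ᶜ ∂quotM F
      = 0 := by
    refine le_antisymm ?_ zero_le
    refine ge_of_tendsto ENNReal.tendsto_inv_nat_nhds_zero ?_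
    filter_upwards [eventually_ge_atTop 1] with m hm
    obtain ⟨n, hn⟩ := mem_iUnion.1 (hF m hm b₁ b₂ hb₁ hb hb₂)
    exact total_bound hC hβ0 F hν hn
  replace hz := (lintegral_eq_zero_iff ((hν.2.1 _ hI).mul (hν.2.1 _ hI.compl))).1 hz
  filter_upwards [hz] with y hy
  have := hν.1 y
  rcases mul_eq_zero.1 hy with h | h
  · exact Or.inl h
  · exact Or.inr ((prob_compl_eq_zero_iff hI).1 h)

end
end
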